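/- arXiv:2602.08399 — 5 statements merged into one kernel-verified Lean document; each statement's English description precedes it below -/
import Mathlib

section
/- Let (P,Q) be a multipoint Padé pair of type (n,n) for the data (a_j, f_j). Then for every polynomial p with complex coefficients and deg p ≤ n−1, one has ∑_{j=0}^{2n} Q(a_j)·p(a_j)·f_j / ω'(a_j) = 0. -/
open Polynomial Finset

/-- **Discrete orthogonality for multipoint Padé pairs.**
Let `n ≥ 1`, let `a 0, …, a (2n)` be distinct complex numbers, `f j ∈ ℂ` given values,
and `ω(z) = ∏_{j}(z - a j)`.  If `(P, Q)` is a multipoint Padé pair of type `(n,n)`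
(i.e. `deg P ≤ n`, `deg Q ≤ n`, `Q ≠ 0`, and `Q(a j)·f j - P(a j) = 0` for all `j`),
then for every polynomial `p` with `deg p ≤ n - 1` one has
`∑_{j=0}^{2n} Q(a j)·p(a j)·f j / ω'(a j) = 0`. -/
theorem discrete_orthogonality
    (n : ℕ) (hn : 1 ≤ n)
    (a : Fin (2 * n + 1) → ℂ) (ha : Function.Injective a)
    (f : Fin (2 * n + 1) → ℂ)
    (ω : Polynomial ℂ) (hω : ω = ∏ j : Fin (2 * n + 1), (X - C (a j)))
    (P Q : Polynomial ℂ)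
    (hP : P.degree ≤ n) (hQ : Q.degree ≤ n) (hQ0 : Q ≠ 0)
    (hinterp : ∀ j, Q.eval (a j) * f j - P.eval (a j) = 0)
    (p : Polynomial ℂ) (hp : p.degree ≤ ((n - 1 : ℕ) : WithBot ℕ)) :
    ∑ j : Fin (2 * n + 1),
      Q.eval (a j) * p.eval (a j) * f j / (Polynomial.derivative ω).eval (a j) = 0 := by
  have hdeg : (P * p).degree < ((2 * n : ℕ) : WithBot ℕ) := by
    rw [degree_mul]
    refine lt_of_le_of_lt (add_le_add hP hp) ?_
    norm_cast
    omega
  have hc := Lagrange.coeff_eq_sum (s := (Finset.univ : Finset (Fin (2 * n + 1)))) (v := a)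
    ha.injOn (P := P * p) (by
      refine hdeg.trans ?_
      rw [Finset.card_univ, Fintype.card_fin]
      norm_cast
      omega)
  rw [Finset.card_univ, Fintype.card_fin, Nat.add_sub_cancel,
    coeff_eq_zero_of_degree_lt hdeg] at hc
  rw [hc]
  refine Finset.sum_congr rfl fun j _ => ?_
  have hω' : ω = Lagrange.nodal Finset.univ a := hω
  rw [hω', Lagrange.eval_nodal_derivative_eval_node_eq (Finset.mem_univ j),
    Lagrange.eval_nodal, eval_mul]
  congr 1
  linear_combination p.eval (a j) * hinterp j
end

section
/- The pole Riemann–Hilbert problem has at most one solution: if Y and Ỹ are both solutions (for the same n, nodes a_j and weights w_j), then Y(z) = Ỹ(z) for all z ∈ ℂ ∖ {a_0,…,a_{2n}}. -/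
open Filter Topology

/-- A solution of the pole Riemann–Hilbert problem with nodes `a j` and weights `w j`:
a `2×2` matrix-valued function `Y`, holomorphic entrywise off the nodes, whose first
column extends holomorphically across each node (with values `v i`), whose second column
has at most a simple pole at each node `a j` with residue `w j` times the value of the
first column there, and normalized at infinity by
`Y₁₁ z⁻ⁿ → 1`, `Y₂₂ zⁿ → 1`, `Y₂₁ z⁻ⁿ → 0`, `Y₁₂ zⁿ → 0`. -/
structure IsPoleRHPSolution (n : ℕ) (a w : Fin (2 * n + 1) → ℂ)
    (Y : ℂ → Matrix (Fin 2) (Fin 2) ℂ) : Prop where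
  hol : ∀ i k : Fin 2, DifferentiableOn ℂ (fun z => Y z i k) {z | ∀ j, z ≠ a j}
  residue : ∀ j : Fin (2 * n + 1), ∃ v : Fin 2 → ℂ,
    (∀ i : Fin 2, ∃ (F : ℂ → ℂ) (U : Set ℂ), IsOpen U ∧ a j ∈ U ∧
      DifferentiableOn ℂ F U ∧ F (a j) = v i ∧
      ∀ z ∈ U, z ≠ a j → F z = Y z i 0) ∧
    (∀ i : Fin 2, ∃ (G : ℂ → ℂ) (U : Set ℂ), IsOpen U ∧ a j ∈ U ∧
      DifferentiableOn ℂ G U ∧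
      ∀ z ∈ U, z ≠ a j → G z = Y z i 1 - w j * v i / (z - a j))
  inf11 : Tendsto (fun z : ℂ => Y z 0 0 / z ^ n) (Bornology.cobounded ℂ) (𝓝 1)
  inf22 : Tendsto (fun z : ℂ => Y z 1 1 * z ^ n) (Bornology.cobounded ℂ) (𝓝 1)
  inf21 : Tendsto (fun z : ℂ => Y z 1 0 / z ^ n) (Bornology.cobounded ℂ) (𝓝 0)
  inf12 : Tendsto (fun z : ℂ => Y z 0 1 * z ^ n) (Bornology.cobounded ℂ) (𝓝 0)

/-- Liouville after removing finitely many singularities. -/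
lemma removable_liouville (S : Set ℂ) (hS : S.Finite) (M : ℂ → ℂ) (c : ℂ)
    (hM : DifferentiableOn ℂ M Sᶜ)
    (h : ∀ a ∈ S, ∃ H : ℂ → ℂ, DifferentiableAt ℂ H a ∧ M =ᶠ[𝓝[≠] a] H)
    (hc : Tendsto M (Bornology.cobounded ℂ) (𝓝 c)) : ∀ z ∉ S, M z = c := by
  classical
  have h' : ∀ a, ∃ H : ℂ → ℂ, a ∈ S → DifferentiableAt ℂ H a ∧ M =ᶠ[𝓝[≠] a] H := by
    intro a
    by_cases ha : a ∈ S
    · obtain ⟨H, hH⟩ := h a ha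
      exact ⟨H, fun _ => hH⟩
    · exact ⟨0, fun h => absurd h ha⟩
  choose H hH using h'
  set g : ℂ → ℂ := fun z => if z ∈ S then H z z else M z with hg
  have hoff : ∀ z, z ∉ S → g z = M z := fun z hz => by simp [hg, hz]
  have hopen : IsOpen Sᶜ := hS.isClosed.isOpen_compl
  have hd : Differentiable ℂ g := by
    intro z
    by_cases hz : z ∈ S
    · obtain ⟨h1, h2⟩ := hH z hz
      refine h1.congr_of_eventuallyEq ?_
      have h3 : ∀ᶠ x in 𝓝 z, x ∉ S \ {z} :=
        (hS.subset Set.sdiff_subset).isClosed.isOpen_compl.mem_nhds (by simp)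
      filter_upwards [h3, eventually_nhdsWithin_iff.1 h2] with x hx hx2
      by_cases hxz : x = z
      · subst hxz
        simp [hg, hz]
      · rw [hoff x (fun hxs => hx ⟨hxs, hxz⟩)]
        exact hx2 hxz
    · refine (hM.differentiableAt (hopen.mem_nhds hz)).congr_of_eventuallyEq ?_
      filter_upwards [hopen.mem_nhds hz] with x hx
      exact hoff x hx
  have hgc : Tendsto g (cocompact ℂ) (𝓝 c) := by
    rw [← Metric.cobounded_eq_cocompact]
    refine hc.congr' ?_
    have : ∀ᶠ x in Bornology.cobounded ℂ, x ∉ S := Bornology.isBounded_def.1 hS.isBounded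
    filter_upwards [this] with x hx
    exact (hoff x hx).symm
  intro z hz
  rw [← hoff z hz]
  exact hd.apply_eq_of_tendsto_cocompact z hgc

/-- The bilinear combination of rows of two solutions is constant. -/
lemma rows_const {n : ℕ} {a w : Fin (2 * n + 1) → ℂ}
    {A B : ℂ → Matrix (Fin 2) (Fin 2) ℂ}
    (hA : IsPoleRHPSolution n a w A) (hB : IsPoleRHPSolution n a w B) (i k : Fin 2)
    {p q r s : ℂ}
    (h1 : Tendsto (fun z : ℂ => A z i 0 / z ^ n) (Bornology.cobounded ℂ) (𝓝 p))
    (h2 : Tendsto (fun z : ℂ => B z k 1 * z ^ n) (Bornology.cobounded ℂ) (𝓝 q))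
    (h3 : Tendsto (fun z : ℂ => A z i 1 * z ^ n) (Bornology.cobounded ℂ) (𝓝 r))
    (h4 : Tendsto (fun z : ℂ => B z k 0 / z ^ n) (Bornology.cobounded ℂ) (𝓝 s))
    (z : ℂ) (hz : ∀ j, z ≠ a j) :
    A z i 0 * B z k 1 - A z i 1 * B z k 0 = p * q - r * s := by
  have hset : {z | ∀ j, z ≠ a j} = (Set.range a)ᶜ := by
    ext x
    simp [eq_comm]
  refine removable_liouville (Set.range a) (Set.finite_range a)
    (fun z => A z i 0 * B z k 1 - A z i 1 * B z k 0) _ ?_ ?_ ?_ z ?_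
  · rw [← hset]
    exact ((hA.hol i 0).mul (hB.hol k 1)).sub ((hA.hol i 1).mul (hB.hol k 0))
  · rintro _ ⟨j, rfl⟩
    obtain ⟨v, hv0, hv1⟩ := hA.residue j
    obtain ⟨u, hu0, hu1⟩ := hB.residue j
    obtain ⟨F, U1, o1, m1, d1, e1, f1⟩ := hv0 i
    obtain ⟨G, U2, o2, m2, d2, f2⟩ := hv1 i
    obtain ⟨F', U3, o3, m3, d3, e3, f3⟩ := hu0 k
    obtain ⟨G', U4, o4, m4, d4, f4⟩ := hu1 k
    have n1 := o1.mem_nhds m1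
    have n2 := o2.mem_nhds m2
    have n3 := o3.mem_nhds m3
    have n4 := o4.mem_nhds m4
    have D1 := d1.differentiableAt n1
    have D2 := d2.differentiableAt n2
    have D3 := d3.differentiableAt n3
    have D4 := d4.differentiableAt n4
    have S1 := ((Complex.differentiableOn_dslope n1).2 d1).differentiableAt n1
    have S3 := ((Complex.differentiableOn_dslope n3).2 d3).differentiableAt n3
    refine ⟨fun z => F z * G' z - G z * F' z +
      w j * (dslope F (a j) z * u k - v i * dslope F' (a j) z), ?_, ?_⟩
    · exact ((D1.mul D4).sub (D2.mul D3)).add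
        (((S1.mul_const _).sub (S3.const_mul _)).const_mul _)
    · rw [EventuallyEq, eventually_nhdsWithin_iff]
      filter_upwards [n1, n2, n3, n4] with x x1 x2 x3 x4 hx
      have hx : x ≠ a j := hx
      have hx' : x - a j ≠ 0 := sub_ne_zero.2 hx
      rw [dslope_of_ne _ hx, dslope_of_ne _ hx, slope_def_field, slope_def_field, e1, e3,
        f2 x x2 hx, f4 x x4 hx, f1 x x1 hx, f3 x x3 hx]
      field_simp
      ring
  · refine ((h1.mul h2).sub (h3.mul h4)).congr' ?_
    have : ∀ᶠ x in Bornology.cobounded ℂ, x ∉ ({0} : Set ℂ) :=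
      Bornology.isBounded_def.1 (Set.finite_singleton 0).isBounded
    filter_upwards [this] with x hx
    have hx : x ≠ 0 := hx
    field_simp
  · rintro ⟨j, rfl⟩
    exact hz j rfl

/-- **Uniqueness for the pole Riemann–Hilbert problem.**
If `Y` and `Ỹ` are both solutions of the pole Riemann–Hilbert problem for the same `n`,
distinct nodes `a j` and weights `w j`, then `Y z = Ỹ z` for all `z ∈ ℂ ∖ {a 0, …, a (2n)}`. -/
theorem poleRHP_uniqueness
    (n : ℕ) (hn : 1 ≤ n)
    (a : Fin (2 * n + 1) → ℂ) (ha : Function.Injective a)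
    (w : Fin (2 * n + 1) → ℂ)
    (Y Ytilde : ℂ → Matrix (Fin 2) (Fin 2) ℂ)
    (hY : IsPoleRHPSolution n a w Y) (hYt : IsPoleRHPSolution n a w Ytilde) :
    ∀ z : ℂ, (∀ j, z ≠ a j) → Y z = Ytilde z := by
  intro z hz
  have a00 := rows_const hY hYt 0 0 hY.inf11 hYt.inf12 hY.inf12 hYt.inf11 z hz
  have a01 := rows_const hY hYt 0 1 hY.inf11 hYt.inf22 hY.inf12 hYt.inf21 z hz
  have a10 := rows_const hY hYt 1 0 hY.inf21 hYt.inf12 hY.inf22 hYt.inf11 z hz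
  have a11 := rows_const hY hYt 1 1 hY.inf21 hYt.inf22 hY.inf22 hYt.inf21 z hz
  have b01 := rows_const hYt hYt 0 1 hYt.inf11 hYt.inf22 hYt.inf12 hYt.inf21 z hz
  ext i k
  fin_cases i <;> fin_cases k <;> simp only [Fin.zero_eta, Fin.mk_one]
  · linear_combination (Ytilde z 0 0) * a01 - (Ytilde z 1 0) * a00 - (Y z 0 0) * b01
  · linear_combination (Ytilde z 0 1) * a01 - (Ytilde z 1 1) * a00 - (Y z 0 1) * b01
  · linear_combination (Ytilde z 0 0) * a11 - (Ytilde z 1 0) * a10 - (Y z 1 0) * b01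
  · linear_combination (Ytilde z 0 1) * a11 - (Ytilde z 1 1) * a10 - (Y z 1 1) * b01
end

section
/- Set ω_n(z) = ∏_{k=0}^{2n}(z − a_{n,k}), so that ω_n'(a_{n,j}) = ∏_{k≠j}(a_{n,j} − a_{n,k}). Then there exists C > 0, depending only on κ, A, B, such that for all n ≥ 2 and all j = 0,1,…,2n: | log|ω_n'(a_{n,j})| − 2n·log n − n·∫_A^B log|α_{n,j} − t|·κ(t) dt | ≤ C·log n. -/
open Finset

/-- One-sided comparison of a sum of logarithms with the corresponding integral. -/
theorem one_sided_bound (n m M L : ℝ) (hn : 0 < n) (hm : 0 < m)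
    (g : ℝ → ℝ) (hgc : ContinuousOn g (Set.Icc 0 L))
    (hg : ∀ s ∈ Set.Icc 0 L, m ≤ g s ∧ g s ≤ M) (N : ℕ) (β : ℕ → ℝ) (h0 : β 0 = 0)
    (hL : ∀ i ≤ N, β i ≤ L) (hlt : ∀ i < N, β i < β (i+1))
    (hcell : ∀ i < N, n * ∫ s in (β i)..(β (i+1)), g s = 1) :
    ∀ K ≤ N, 0 ≤ ∑ k ∈ range K, Real.log (β (k+1)) - n * ∫ s in 0..(β K), Real.log s * g s ∧
      (1 ≤ K → ∑ k ∈ range K, Real.log (β (k+1)) - n * ∫ s in 0..(β K), Real.log s * g s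
        ≤ Real.log (β K) + M / m + Real.log (n * M)) := by
  have hnn : ∀ i ≤ N, 0 ≤ β i := by
    intro i
    induction i with
    | zero => intro _; rw [h0]
    | succ i ih => intro h; exact (ih (by omega)).trans (hlt i (by omega)).le
  have hgi : ∀ a b, 0 ≤ a → a ≤ b → b ≤ L → IntervalIntegrable g MeasureTheory.volume a b := by
    intro a b ha hab hb
    apply ContinuousOn.intervalIntegrable_of_Icc hab
    exact hgc.mono (Set.Icc_subset_Icc ha hb)
  have hli : ∀ a b, 0 ≤ a → a ≤ b → b ≤ L →
      IntervalIntegrable (fun s => Real.log s * g s) MeasureTheory.volume a b := by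
    intro a b ha hab hb
    apply IntervalIntegrable.mul_continuousOn intervalIntegral.intervalIntegrable_log'
    rw [Set.uIcc_of_le hab]
    exact hgc.mono (Set.Icc_subset_Icc ha hb)
  -- upper bound on each cell
  have hup : ∀ i < N, n * ∫ s in (β i)..(β (i+1)), Real.log s * g s ≤ Real.log (β (i+1)) := by
    intro i hi
    have h1 := hnn i hi.le
    have h2 := hlt i hi
    have h3 := hL (i+1) hi
    have : ∫ s in (β i)..(β (i+1)), Real.log s * g s
        ≤ ∫ s in (β i)..(β (i+1)), Real.log (β (i+1)) * g s := by
      apply intervalIntegral.integral_mono_on_of_le_Ioo h2.le (hli _ _ h1 h2.le h3)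
        ((hgi _ _ h1 h2.le h3).const_mul _)
      intro s hs
      have hs0 : 0 < s := h1.trans_lt hs.1
      have := hg s ⟨hs0.le, hs.2.le.trans h3⟩
      exact mul_le_mul_of_nonneg_right (Real.log_le_log hs0 hs.2.le) (hm.le.trans this.1)
    rw [intervalIntegral.integral_const_mul] at this
    calc _ ≤ n * (Real.log (β (i+1)) * ∫ s in (β i)..(β (i+1)), g s) :=
          mul_le_mul_of_nonneg_left this hn.le
      _ = Real.log (β (i+1)) * (n * ∫ s in (β i)..(β (i+1)), g s) := by ring
      _ = _ := by rw [hcell i hi, mul_one]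
  have hlow : ∀ i < N, 0 < i →
      Real.log (β i) ≤ n * ∫ s in (β i)..(β (i+1)), Real.log s * g s := by
    intro i hi hi0
    have h1 : 0 < β i := by
      obtain ⟨l, rfl⟩ : ∃ l, i = l + 1 := ⟨i - 1, by omega⟩
      exact (hnn l (by omega)).trans_lt (hlt l (by omega))
    have h2 := hlt i hi
    have h3 := hL (i+1) hi
    have : ∫ s in (β i)..(β (i+1)), Real.log (β i) * g s
        ≤ ∫ s in (β i)..(β (i+1)), Real.log s * g s := by
      apply intervalIntegral.integral_mono_on_of_le_Ioo h2.le
        ((hgi _ _ h1.le h2.le h3).const_mul _) (hli _ _ h1.le h2.le h3)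
      intro s hs
      have hs0 : 0 < s := h1.trans hs.1
      have := hg s ⟨hs0.le, hs.2.le.trans h3⟩
      exact mul_le_mul_of_nonneg_right (Real.log_le_log h1 hs.1.le) (hm.le.trans this.1)
    rw [intervalIntegral.integral_const_mul] at this
    calc _ = Real.log (β i) * (n * ∫ s in (β i)..(β (i+1)), g s) := by rw [hcell i hi, mul_one]
      _ = n * (Real.log (β i) * ∫ s in (β i)..(β (i+1)), g s) := by ring
      _ ≤ _ := mul_le_mul_of_nonneg_left this hn.le
  have hadd : ∀ K < N, ∫ s in 0..(β (K+1)), Real.log s * g s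
      = (∫ s in 0..(β K), Real.log s * g s) + ∫ s in (β K)..(β (K+1)), Real.log s * g s := by
    intro K hK
    rw [intervalIntegral.integral_add_adjacent_intervals]
    · exact hli _ _ le_rfl (hnn K hK.le) (hL K hK.le)
    · exact hli _ _ (hnn K hK.le) (hlt K hK).le (hL _ hK)
  intro K
  induction K with
  | zero => intro _; simp [h0]
  | succ K ih =>
    intro hK
    obtain ⟨ih1, ih2⟩ := ih (by omega)
    have hK' : K < N := hK
    rw [sum_range_succ, hadd K hK', mul_add]
    refine ⟨by linarith [hup K hK'], fun _ => ?_⟩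
    rcases Nat.eq_zero_or_pos K with rfl | hKp
    · have h2 := hlt 0 hK
      have h3 := hL _ hK
      have hc := hcell 0 hK
      simp only [zero_add, h0, range_zero, sum_empty, intervalIntegral.integral_same,
        mul_zero, zero_add] at *
      set h := β 1
      have hmh : n * (m * h) ≤ 1 := by
        rw [← hc]
        apply mul_le_mul_of_nonneg_left _ hn.le
        have := intervalIntegral.integral_mono_on h2.le
          (intervalIntegrable_const (c := m)) (hgi _ _ le_rfl h2.le h3)
          (fun s hs => (hg s ⟨hs.1, hs.2.trans h3⟩).1)
        simp at this
        linarith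
      have hMh : 1 ≤ n * (M * h) := by
        rw [← hc]
        apply mul_le_mul_of_nonneg_left _ hn.le
        have := intervalIntegral.integral_mono_on h2.le
          (hgi _ _ le_rfl h2.le h3) (intervalIntegrable_const (c := M))
          (fun s hs => (hg s ⟨hs.1, hs.2.trans h3⟩).2)
        simp at this
        linarith
      have hM : 0 < M := by
        have := hg h ⟨h2.le, h3⟩
        linarith
      have hfirst : ∫ s in 0..h, (Real.log h * g s + M * (Real.log s - Real.log h))
          ≤ ∫ s in 0..h, Real.log s * g s := by
        apply intervalIntegral.integral_mono_on_of_le_Ioo h2.le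
          (((hgi _ _ le_rfl h2.le h3).const_mul _).add
            ((intervalIntegral.intervalIntegrable_log'.sub intervalIntegrable_const).const_mul _))
          (hli _ _ le_rfl h2.le h3)
        intro s hs
        have hb := hg s ⟨hs.1.le, hs.2.le.trans h3⟩
        have hl := Real.log_le_log hs.1 hs.2.le
        nlinarith [mul_nonneg (sub_nonneg.2 hl) (sub_nonneg.2 hb.2)]
      rw [intervalIntegral.integral_add ((hgi _ _ le_rfl h2.le h3).const_mul _)
            ((intervalIntegral.intervalIntegrable_log'.sub intervalIntegrable_const).const_mul _),
        intervalIntegral.integral_const_mul, intervalIntegral.integral_const_mul,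
        intervalIntegral.integral_sub intervalIntegral.intervalIntegrable_log'
          intervalIntegrable_const, integral_log, intervalIntegral.integral_const] at hfirst
      simp only [sub_zero, smul_eq_mul, zero_mul, add_zero] at hfirst
      have h5 := mul_le_mul_of_nonneg_left hfirst hn.le
      have h6 : n * (Real.log h * (∫ s in 0..h, g s) + M * (h * Real.log h - h - h * Real.log h))
          = Real.log h * (n * ∫ s in 0..h, g s) - n * M * h := by ring
      rw [h6, hc, mul_one] at h5
      have h7 : n * M * h ≤ M / m := by
        rw [le_div_iff₀ hm]
        nlinarith
      have h8 : 0 ≤ Real.log h + Real.log (n * M) := by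
        rw [← Real.log_mul h2.ne' (by positivity)]
        apply Real.log_nonneg
        nlinarith
      linarith
    · have := ih2 hKp
      linarith [hlow K hK' hKp]

/-- **Asymptotics of the derivative of the node polynomial at the nodes.**
Let `0 < A < B`, `κ` real-analytic and positive on an open set containing `[A,B]` with
`∫_A^B κ = 2`, quantile nodes `α n j` and scaled nodes `a_{n,j} = n·α n j`.  With
`ω_n(z) = ∏_{k=0}^{2n}(z - a_{n,k})`, so that `ω_n'(a_{n,j}) = ∏_{k≠j}(a_{n,j} - a_{n,k})`,
there exists `C > 0`, depending only on `κ, A, B`, such that for all `n ≥ 2` and all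
`j = 0, …, 2n`:
`| log|ω_n'(a_{n,j})| - 2n·log n - n·∫_A^B log|α n j - t|·κ(t) dt | ≤ C·log n`. -/
theorem node_polynomial_derivative_asymptotics
    (A B : ℝ) (hA : 0 < A) (hAB : A < B)
    (κ : ℝ → ℝ)
    (hκ : ∃ U : Set ℝ, IsOpen U ∧ Set.Icc A B ⊆ U ∧
      ∀ x ∈ U, AnalyticAt ℝ κ x ∧ 0 < κ x)
    (hnorm : ∫ x in A..B, κ x = 2)
    (α : ℕ → ℕ → ℝ)
    (hα : ∀ n : ℕ, 1 ≤ n → ∀ j, j ≤ 2 * n →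
      α n j ∈ Set.Icc A B ∧ ∫ t in A..(α n j), κ t = (j : ℝ) / n) :
    ∃ C : ℝ, 0 < C ∧ ∀ n : ℕ, 2 ≤ n → ∀ j, j ≤ 2 * n →
      |Real.log
          |∏ k ∈ (Finset.range (2 * n + 1)).erase j,
              ((n : ℝ) * α n j - (n : ℝ) * α n k)|
        - 2 * (n : ℝ) * Real.log n
        - (n : ℝ) * ∫ t in A..B, Real.log |α n j - t| * κ t| ≤ C * Real.log n := by
  obtain ⟨U, -, hsub, hU⟩ := hκ
  have hc : ContinuousOn κ (Set.Icc A B) := fun x hx =>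
    (hU x (hsub hx)).1.continuousAt.continuousWithinAt
  have hne : (Set.Icc A B).Nonempty := Set.nonempty_Icc.2 hAB.le
  obtain ⟨p, hp, hpmin⟩ := isCompact_Icc.exists_isMinOn hne hc
  obtain ⟨q, hq, hqmax⟩ := isCompact_Icc.exists_isMaxOn hne hc
  obtain ⟨m, hm, hmle⟩ : ∃ m, 0 < m ∧ ∀ x ∈ Set.Icc A B, m ≤ κ x :=
    ⟨κ p, (hU p (hsub hp)).2, fun x hx => hpmin hx⟩
  obtain ⟨M, hM, hMle⟩ : ∃ M, 0 < M ∧ ∀ x ∈ Set.Icc A B, κ x ≤ M :=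
    ⟨κ q, (hU q (hsub hq)).2, fun x hx => hqmax hx⟩
  clear hpmin hqmax hU hsub
  have hint : ∀ a ∈ Set.Icc A B, ∀ b ∈ Set.Icc A B,
      IntervalIntegrable κ MeasureTheory.volume a b := by
    intro a ha b hb
    exact (hc.mono (Set.uIcc_subset_Icc ha hb)).intervalIntegrable
  have hAm : A ∈ Set.Icc A B := ⟨le_rfl, hAB.le⟩
  have hBm : B ∈ Set.Icc A B := ⟨hAB.le, le_rfl⟩
  have hlowI : ∀ a ∈ Set.Icc A B, ∀ b ∈ Set.Icc A B, a ≤ b → m * (b - a) ≤ ∫ t in a..b, κ t := by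
    intro a ha b hb hab
    have := intervalIntegral.integral_mono_on hab
      (intervalIntegrable_const (c := m)) (hint a ha b hb)
      (fun s hs => hmle s ⟨ha.1.trans hs.1, hs.2.trans hb.2⟩)
    simp at this
    linarith
  have hdiff : ∀ a ∈ Set.Icc A B, ∀ b ∈ Set.Icc A B,
      ∫ t in a..b, κ t = (∫ t in A..b, κ t) - ∫ t in A..a, κ t := by
    intro a ha b hb
    rw [intervalIntegral.integral_interval_sub_left (hint A hAm b hb) (hint A hAm a ha)]
  -- order is reflected by the distribution function
  have hord : ∀ a ∈ Set.Icc A B, ∀ b ∈ Set.Icc A B,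
      (∫ t in A..a, κ t) < (∫ t in A..b, κ t) → a < b := by
    intro a ha b hb h
    by_contra! hba
    have h1 := hlowI b hb a ha hba
    rw [hdiff b hb a ha] at h1
    nlinarith [mul_nonneg hm.le (sub_nonneg.2 hba)]
  have hinj : ∀ a ∈ Set.Icc A B, ∀ b ∈ Set.Icc A B,
      (∫ t in A..a, κ t) = (∫ t in A..b, κ t) → a ≤ b := by
    intro a ha b hb h
    by_contra! hba
    have h1 := hlowI b hb a ha hba.le
    rw [hdiff b hb a ha] at h1
    nlinarith [mul_pos hm (sub_pos.2 hba)]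
  set D : ℝ := |Real.log (B - A)| + M / m + |Real.log M| with hD
  have hD0 : 0 ≤ D := by positivity
  have hl2 : 0 < Real.log 2 := Real.log_pos (by norm_num)
  refine ⟨2 * (D / Real.log 2 + 1), by positivity, ?_⟩
  intro n hn j hj
  have hn0 : (0:ℝ) < n := by exact_mod_cast (by omega : 0 < n)
  have hln : Real.log 2 ≤ Real.log n :=
    Real.log_le_log (by norm_num) (by exact_mod_cast hn)
  have hmem : ∀ k, k ≤ 2 * n → α n k ∈ Set.Icc A B := fun k hk => (hα n (by omega) k hk).1
  have hval : ∀ k, k ≤ 2 * n → ∫ t in A..(α n k), κ t = (k : ℝ) / n :=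
    fun k hk => (hα n (by omega) k hk).2
  have hmono : ∀ k l, l ≤ 2 * n → k < l → α n k < α n l := by
    intro k l hl hkl
    apply hord _ (hmem k (by omega)) _ (hmem l hl)
    rw [hval k (by omega), hval l hl]
    have : (k:ℝ) < l := by exact_mod_cast hkl
    gcongr
  have hcell : ∀ k, k + 1 ≤ 2 * n → (n:ℝ) * ∫ t in (α n k)..(α n (k+1)), κ t = 1 := by
    intro k hk
    rw [hdiff _ (hmem k (by omega)) _ (hmem _ hk), hval k (by omega), hval _ hk]
    push_cast
    field_simp
    ring
  have hz : α n 0 = A := by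
    apply le_antisymm _ (hmem 0 (by omega)).1
    apply hinj _ (hmem 0 (by omega)) _ hAm
    rw [hval 0 (by omega)]; simp
  have ht : α n (2 * n) = B := by
    apply le_antisymm (hmem _ le_rfl).2
    apply hinj _ hBm _ (hmem _ le_rfl)
    rw [hval _ le_rfl, hnorm]; push_cast; field_simp
  set x := α n j with hx
  have hxm : x ∈ Set.Icc A B := hmem j hj
  -- right side
  have hR := one_sided_bound n m M (B - x) hn0 hm (fun s => κ (x + s))
    (hc.comp (by fun_prop) (fun s hs => ⟨by linarith [hs.1, hxm.1], by linarith [hs.2]⟩))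
    (fun s hs => by
      have : x + s ∈ Set.Icc A B := ⟨by linarith [hs.1, hxm.1], by linarith [hs.2]⟩
      exact ⟨hmle _ this, hMle _ this⟩)
    (2 * n - j) (fun i => α n (j + i) - x) (by simp [hx])
    (fun i hi => by have := (hmem (j + i) (by omega)).2; linarith)
    (fun i hi => by
      have := hmono (j + i) (j + (i + 1)) (by omega) (by omega)
      linarith)
    (fun i hi => by
      simp only [intervalIntegral.integral_comp_add_left (fun s => κ s), add_sub_cancel]
      exact hcell (j + i) (by omega))
    (2 * n - j) le_rfl
  -- left side
  have hLft := one_sided_bound n m M (x - A) hn0 hm (fun s => κ (x - s))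
    (hc.comp (by fun_prop) (fun s hs => ⟨by linarith [hs.2], by linarith [hs.1, hxm.2]⟩))
    (fun s hs => by
      have : x - s ∈ Set.Icc A B := ⟨by linarith [hs.2], by linarith [hs.1, hxm.2]⟩
      exact ⟨hmle _ this, hMle _ this⟩)
    j (fun i => x - α n (j - i)) (by simp [hx])
    (fun i hi => by have := (hmem (j - i) (by omega)).1; linarith)
    (fun i hi => by
      have := hmono (j - (i + 1)) (j - i) (by omega) (by omega)
      linarith)
    (fun i hi => by
      simp only [intervalIntegral.integral_comp_sub_left (fun s => κ s), sub_sub_cancel]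
      have := hcell (j - (i + 1)) (by omega)
      rwa [show j - (i + 1) + 1 = j - i by omega] at this)
    j le_rfl
  rw [show j + (2 * n - j) = 2 * n by omega, ht] at hR
  rw [Nat.sub_self, hz] at hLft
  -- integrals
  have hIR : ∫ s in 0..(B - x), Real.log s * κ (x + s) = ∫ t in x..B, Real.log |x - t| * κ t := by
    have := intervalIntegral.integral_comp_add_left (a := 0) (b := B - x)
      (fun t => Real.log |x - t| * κ t) x
    rw [add_zero, add_sub_cancel] at this
    rw [← this]
    congr 1; ext s
    simp
  have hIL : ∫ s in 0..(x - A), Real.log s * κ (x - s) = ∫ t in A..x, Real.log |x - t| * κ t := by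
    have := intervalIntegral.integral_comp_sub_left (a := 0) (b := x - A)
      (fun t => Real.log |x - t| * κ t) x
    rw [sub_zero, sub_sub_cancel] at this
    rw [← this]
    congr 1; ext s
    simp
  rw [hIR] at hR
  rw [hIL] at hLft
  have hlogint : ∀ a ∈ Set.Icc A B, ∀ b ∈ Set.Icc A B,
      IntervalIntegrable (fun t => Real.log |x - t| * κ t) MeasureTheory.volume a b := by
    intro a ha b hb
    apply IntervalIntegrable.mul_continuousOn _ (hc.mono (Set.uIcc_subset_Icc ha hb))
    have := (intervalIntegral.intervalIntegrable_log' (a := x - a) (b := x - b)).comp_sub_left x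
    simpa using this
  have hsplit : ∫ t in A..B, Real.log |x - t| * κ t
      = (∫ t in A..x, Real.log |x - t| * κ t) + ∫ t in x..B, Real.log |x - t| * κ t :=
    (intervalIntegral.integral_add_adjacent_intervals
      (hlogint _ hAm _ hxm) (hlogint _ hxm _ hBm)).symm
  -- the sum
  have hneq : ∀ k ∈ (range (2 * n + 1)).erase j, x - α n k ≠ 0 := by
    intro k hk
    rw [mem_erase, mem_range] at hk
    rcases lt_or_gt_of_ne hk.1 with h | h
    · have := hmono k j hj h
      exact (sub_pos.2 this).ne'
    · have := hmono j k (by omega) h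
      exact (sub_neg.2 this).ne
  have hsum : Real.log |∏ k ∈ (range (2 * n + 1)).erase j, ((n : ℝ) * x - (n : ℝ) * α n k)|
      = 2 * n * Real.log n + ((∑ k ∈ range j, Real.log (x - α n (j - (k + 1))))
        + ∑ k ∈ range (2 * n - j), Real.log (α n (j + (k + 1)) - x)) := by
    simp only [← mul_sub]
    rw [Real.log_abs, prod_mul_distrib, prod_const, card_erase_of_mem (by simp; omega), card_range,
      Real.log_mul (by positivity) (prod_ne_zero_iff.2 hneq), Real.log_pow, Real.log_prod hneq,
      Finset.sum_erase _ (by simp [hx])]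
    congr 1
    · push_cast; simp
    rw [show 2 * n + 1 = j + ((2 * n - j) + 1) by omega, sum_range_add]
    congr 1
    · rw [← sum_range_reflect]
      apply sum_congr rfl
      intro k _
      rw [show j - 1 - k = j - (k + 1) by omega]
    · rw [sum_range_succ']
      simp only [add_zero, ← hx, sub_self, Real.log_zero]
      apply sum_congr rfl
      intro k _
      rw [← Real.log_neg_eq_log, neg_sub]
  rw [hsum, hsplit]
  set SL := ∑ k ∈ range j, Real.log (x - α n (j - (k + 1)))
  set SR := ∑ k ∈ range (2 * n - j), Real.log (α n (j + (k + 1)) - x)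
  set IL := ∫ t in A..x, Real.log |x - t| * κ t with hILd
  set IR := ∫ t in x..B, Real.log |x - t| * κ t with hIRd
  have hlnM : Real.log (n * M) ≤ Real.log n + |Real.log M| := by
    rw [Real.log_mul hn0.ne' hM.ne']
    linarith [le_abs_self (Real.log M)]
  have hlog0 : 0 ≤ Real.log n := hl2.le.trans hln
  have hUL : SL - n * IL ≤ D + Real.log n := by
    rcases Nat.eq_zero_or_pos j with h | h
    · have e1 : SL = 0 := by simp [SL, h]
      have e2 : IL = 0 := by rw [hILd, hx, h, hz]; simp
      rw [e1, e2]; simp; linarith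
    · have h1 := hLft.2 h
      have h2 : A < x := by rw [← hz]; exact hmono 0 j hj h
      have h3 : Real.log (x - A) ≤ Real.log (B - A) :=
        Real.log_le_log (by linarith) (by linarith [hxm.2])
      linarith [le_abs_self (Real.log (B - A))]
  have hUR : SR - n * IR ≤ D + Real.log n := by
    rcases Nat.eq_zero_or_pos (2 * n - j) with h | h
    · have e1 : SR = 0 := by simp [SR, h]
      have e2 : IR = 0 := by
        rw [hIRd, hx, show j = 2 * n by omega, ht]; simp
      rw [e1, e2]; simp; linarith
    · have h1 := hR.2 h
      have h2 : x < B := by rw [← ht]; exact hmono j (2 * n) le_rfl (by omega)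
      have h3 : Real.log (B - x) ≤ Real.log (B - A) :=
        Real.log_le_log (by linarith) (by linarith [hxm.1])
      linarith [le_abs_self (Real.log (B - A))]
  have hDl : D ≤ D / Real.log 2 * Real.log n := by
    rw [div_mul_eq_mul_div, le_div_iff₀ hl2]
    exact mul_le_mul_of_nonneg_left hln hD0
  rw [show 2 * (n:ℝ) * Real.log n + (SL + SR) - 2 * n * Real.log n - n * (IL + IR)
    = (SL - n * IL) + (SR - n * IR) by ring, abs_of_nonneg (by linarith [hR.1, hLft.1])]
  linarith
end

section
/- There exists a unique measure μ* in the admissible class 𝔄 that minimizes the weighted logarithmic energy, i.e., I_V[μ*] ≤ I_V[μ] for all μ ∈ 𝔄, and any μ ∈ 𝔄 with I_V[μ] = I_V[μ*] equals μ*. -/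
open MeasureTheory

/-- The external field `V(x) = -2 ∫_A^B log|x-t| κ(t) dt`. -/
noncomputable def extField (A B : ℝ) (κ : ℝ → ℝ) (x : ℝ) : ℝ :=
  -2 * ∫ t in A..B, Real.log |x - t| * κ t

/-- The admissible class `𝔄`: Borel probability measures supported on `[A,B]`,
absolutely continuous w.r.t. Lebesgue measure with density `0 ≤ dμ/dx ≤ κ` a.e. -/
def AdmissibleClass (A B : ℝ) (κ : ℝ → ℝ) (μ : Measure ℝ) : Prop :=
  IsProbabilityMeasure μ ∧ μ (Set.Icc A B)ᶜ = 0 ∧ μ ≪ volume ∧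
    ∀ᵐ x ∂(volume.restrict (Set.Icc A B)),
      μ.rnDeriv volume x ≤ ENNReal.ofReal (κ x)

/-- The weighted logarithmic energy
`I_V[μ] = ∬ log(1/|x-y|) dμ(x) dμ(y) + ∫ V dμ`. -/
noncomputable def logEnergy (A B : ℝ) (κ : ℝ → ℝ) (μ : Measure ℝ) : ℝ :=
  (∫ x, (∫ y, Real.log (1 / |x - y|) ∂μ) ∂μ) + ∫ x, extField A B κ x ∂μ

open Filter Topology

/-- Lebesgue measure on `[A,B]`. -/
noncomputable abbrev lamM (A B : ℝ) : Measure ℝ := volume.restrict (Set.Icc A B)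

/-- The logarithmic bilinear form. -/
noncomputable def logForm (A B : ℝ) (f g : ℝ → ℝ) : ℝ :=
  ∫ p : ℝ × ℝ, (-Real.log |p.1 - p.2|) * (f p.1 * g p.2) ∂((lamM A B).prod (lamM A B))

/-- Bounded measurable functions. -/
def BddMeas (f : ℝ → ℝ) : Prop := Measurable f ∧ ∃ M : ℝ, ∀ x, |f x| ≤ M

lemma BddMeas.sub {f g : ℝ → ℝ} (hf : BddMeas f) (hg : BddMeas g) : BddMeas (fun x => f x - g x) := by
  obtain ⟨hf, M, hM⟩ := hf
  obtain ⟨hg, N, hN⟩ := hg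
  exact ⟨hf.sub hg, M + N, fun x => (abs_sub _ _).trans (add_le_add (hM x) (hN x))⟩

lemma BddMeas.integrable {f : ℝ → ℝ} (hf : BddMeas f) (μ : Measure ℝ) [IsFiniteMeasure μ] :
    Integrable f μ := by
  obtain ⟨hf, M, hM⟩ := hf
  exact Integrable.of_bound hf.aestronglyMeasurable M (ae_of_all _ hM)

lemma kernel_integrable (A B : ℝ) :
    Integrable (fun p : ℝ × ℝ => -Real.log |p.1 - p.2|) ((lamM A B).prod (lamM A B)) := by
  have h1 : Integrable ((Set.Icc A B).indicator (fun _ => (1:ℝ))) volume := by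
    rw [integrable_indicator_iff measurableSet_Icc]
    exact integrableOn_const (by simp)
  have h2 : Integrable ((Set.uIcc (A-B) (B-A)).indicator Real.log) volume := by
    rw [integrable_indicator_iff measurableSet_uIcc]
    exact (intervalIntegrable_iff' (by simp)).1 intervalIntegral.intervalIntegrable_log'
  have h3 := (h1.convolution_integrand (ContinuousLinearMap.mul ℝ ℝ) h2).neg
  have h4 := h3.restrict (s := Set.Icc A B ×ˢ Set.Icc A B)
  rw [← Measure.prod_restrict] at h4
  refine h4.congr ?_
  rw [Measure.prod_restrict]
  filter_upwards [ae_restrict_mem (measurableSet_Icc.prod measurableSet_Icc)] with p hp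
  obtain ⟨⟨h1, h2⟩, h3, h4⟩ := hp
  have h5 : p.1 - p.2 ∈ Set.uIcc (A-B) (B-A) := by
    apply Set.Icc_subset_uIcc
    constructor <;> linarith
  have h6 : p.2 ∈ Set.Icc A B := ⟨h3, h4⟩
  simp [Set.indicator_of_mem h5, h6, Real.log_abs]

lemma bounded_mul_integrable {A B : ℝ} {K : ℝ × ℝ → ℝ}
    (hK : Integrable K ((lamM A B).prod (lamM A B)))
    {f g : ℝ → ℝ} (hf : BddMeas f) (hg : BddMeas g) :
    Integrable (fun p : ℝ × ℝ => K p * (f p.1 * g p.2)) ((lamM A B).prod (lamM A B)) := by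
  obtain ⟨hf, M, hM⟩ := hf
  obtain ⟨hg, N, hN⟩ := hg
  refine hK.mul_bdd (c := M * N) ?_ (ae_of_all _ fun p => ?_)
  · exact ((hf.comp measurable_fst).mul (hg.comp measurable_snd)).aestronglyMeasurable
  · rw [norm_mul]
    exact mul_le_mul (hM _) (hN _) (norm_nonneg _) ((abs_nonneg _).trans (hM p.1))

lemma logForm_integrable (A B : ℝ) {f g : ℝ → ℝ} (hf : BddMeas f) (hg : BddMeas g) :
    Integrable (fun p : ℝ × ℝ => (-Real.log |p.1 - p.2|) * (f p.1 * g p.2))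
      ((lamM A B).prod (lamM A B)) :=
  bounded_mul_integrable (kernel_integrable A B) hf hg

lemma logForm_comm (A B : ℝ) (f g : ℝ → ℝ) : logForm A B f g = logForm A B g f := by
  unfold logForm
  rw [← integral_prod_swap]
  refine integral_congr_ae (ae_of_all _ fun p => ?_)
  simp only [Prod.fst_swap, Prod.snd_swap, abs_sub_comm p.2 p.1, mul_comm]

lemma logForm_comb (A B a b : ℝ) {f g h : ℝ → ℝ} (hf : BddMeas f) (hg : BddMeas g) (hh : BddMeas h) :
    logForm A B (fun x => a * f x + b * g x) h = a * logForm A B f h + b * logForm A B g h := by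
  unfold logForm
  rw [← integral_const_mul, ← integral_const_mul, ← integral_add]
  · refine integral_congr_ae (ae_of_all _ fun p => ?_)
    simp only; ring
  · exact (logForm_integrable A B hf hh).const_mul _
  · exact (logForm_integrable A B hg hh).const_mul _

/-- product of window indicators -/
lemma tent_fun (s x y z : ℝ) :
    (Set.Ico z (z+s)).indicator (fun _ => (1:ℝ)) x * (Set.Ico z (z+s)).indicator (fun _ => (1:ℝ)) y
      = (Set.Ioc (max (x-s) (y-s)) (min x y)).indicator (fun _ => (1:ℝ)) z := by
  simp only [Set.indicator_apply, Set.mem_Ico, Set.mem_Ioc, max_lt_iff, le_min_iff]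
  split_ifs <;> grind

/-- tent kernel as an integral -/
lemma tent_eq (s x y : ℝ) :
    ∫ z, (Set.Ico z (z+s)).indicator (fun _ => (1:ℝ)) x * (Set.Ico z (z+s)).indicator (fun _ => (1:ℝ)) y
      = max 0 (s - |x - y|) := by
  simp_rw [tent_fun]
  rw [integral_indicator measurableSet_Ioc]
  simp only [integral_const, smul_eq_mul, mul_one, measureReal_restrict_apply_univ,
    Real.volume_real_Ioc]
  rw [max_comm, max_sub_sub_right]
  congr 1
  rcases le_total x y with h | h
  · rw [max_eq_right h, min_eq_left h, abs_of_nonpos (by linarith)]; ring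
  · rw [max_eq_left h, min_eq_right h, abs_of_nonneg (by linarith)]; ring

/-- Fubini for a parametrised kernel -/
lemma form_swap {A B : ℝ} {W : Type*} [MeasurableSpace W] (ν : Measure W) [SFinite ν]
    (Ψ : ℝ × ℝ → W → ℝ) (hm : Measurable (Function.uncurry Ψ)) (hpos : ∀ p w, 0 ≤ Ψ p w)
    (hi : ∀ᵐ p ∂((lamM A B).prod (lamM A B)), Integrable (Ψ p) ν)
    (hi2 : Integrable (fun p => ∫ w, Ψ p w ∂ν) ((lamM A B).prod (lamM A B)))
    {h : ℝ → ℝ} (hh : BddMeas h) :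
    Integrable (fun w => ∫ p, Ψ p w * (h p.1 * h p.2) ∂((lamM A B).prod (lamM A B))) ν ∧
    ∫ p, (∫ w, Ψ p w ∂ν) * (h p.1 * h p.2) ∂((lamM A B).prod (lamM A B))
      = ∫ w, (∫ p, Ψ p w * (h p.1 * h p.2) ∂((lamM A B).prod (lamM A B))) ∂ν := by
  have hh' := hh
  obtain ⟨hh, M, hM⟩ := hh
  have key : Integrable (Function.uncurry (fun p w => Ψ p w * (h p.1 * h p.2)))
      (((lamM A B).prod (lamM A B)).prod ν) := by
    rw [integrable_prod_iff]
    · constructor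
      · filter_upwards [hi] with p hp
        exact hp.mul_const (h p.1 * h p.2)
      · have : (fun p : ℝ × ℝ => ∫ w, ‖Function.uncurry (fun p w => Ψ p w * (h p.1 * h p.2)) (p, w)‖ ∂ν)
          = fun p => ‖(∫ w, Ψ p w ∂ν) * (h p.1 * h p.2)‖ := by
          ext p
          simp only [Function.uncurry, norm_mul]
          rw [integral_mul_const]
          congr 1
          rw [Real.norm_of_nonneg (integral_nonneg (hpos p))]
          exact integral_congr_ae (ae_of_all _ fun w => Real.norm_of_nonneg (hpos p w))
        rw [this]
        exact (bounded_mul_integrable hi2 hh' hh').norm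
    · have : Measurable (Function.uncurry (fun (p : ℝ × ℝ) (w : W) => Ψ p w * (h p.1 * h p.2))) := by
        refine hm.mul ?_
        exact (hh.comp (measurable_fst.comp measurable_fst)).mul
          (hh.comp (measurable_snd.comp measurable_fst))
      exact this.aestronglyMeasurable
  refine ⟨key.integral_prod_right, ?_⟩
  rw [← integral_integral_swap key]
  refine integral_congr_ae (ae_of_all _ fun p => ?_)
  simp only
  rw [integral_mul_const]

lemma tentForm_eq {A B : ℝ} (s : ℝ) {h : ℝ → ℝ} (hh : BddMeas h) :
    Integrable (fun z => (∫ x, (Set.Ico z (z+s)).indicator (fun _ => (1:ℝ)) x * h x ∂(lamM A B))^2) ∧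
    ∫ p : ℝ × ℝ, max 0 (s - |p.1 - p.2|) * (h p.1 * h p.2) ∂((lamM A B).prod (lamM A B))
      = ∫ z, (∫ x, (Set.Ico z (z+s)).indicator (fun _ => (1:ℝ)) x * h x ∂(lamM A B))^2 := by
  have hcont : Continuous fun p : ℝ × ℝ => max 0 (s - |p.1 - p.2|) := by fun_prop
  have hTint : Integrable (fun p : ℝ × ℝ => max 0 (s - |p.1 - p.2|)) ((lamM A B).prod (lamM A B)) := by
    refine Integrable.of_bound hcont.aestronglyMeasurable |s| (ae_of_all _ fun p => ?_)
    rw [Real.norm_of_nonneg (le_max_left _ _)]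
    refine max_le (abs_nonneg _) ?_
    linarith [le_abs_self s, abs_nonneg (p.1 - p.2)]
  have key := form_swap (A := A) (B := B) (volume : Measure ℝ)
    (fun p z => (Set.Ico z (z+s)).indicator (fun _ => (1:ℝ)) p.1 *
      (Set.Ico z (z+s)).indicator (fun _ => (1:ℝ)) p.2) ?_ ?_ ?_ ?_ hh
  · have e : ∀ z, ∫ p : ℝ × ℝ, ((Set.Ico z (z+s)).indicator (fun _ => (1:ℝ)) p.1 *
      (Set.Ico z (z+s)).indicator (fun _ => (1:ℝ)) p.2) * (h p.1 * h p.2) ∂((lamM A B).prod (lamM A B))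
      = (∫ x, (Set.Ico z (z+s)).indicator (fun _ => (1:ℝ)) x * h x ∂(lamM A B))^2 := by
      intro z
      rw [sq, ← integral_prod_mul]
      refine integral_congr_ae (ae_of_all _ fun p => ?_)
      simp only; ring
    simp only [e, tent_eq] at key
    exact key
  · have m1 : MeasurableSet {q : (ℝ × ℝ) × ℝ | q.2 ≤ q.1.1 ∧ q.1.1 < q.2 + s} :=
      (measurableSet_le (f := fun q : (ℝ × ℝ) × ℝ => q.2) (g := fun q => q.1.1) (by fun_prop) (by fun_prop)).inter
        (measurableSet_lt (f := fun q : (ℝ × ℝ) × ℝ => q.1.1) (g := fun q => q.2 + s) (by fun_prop) (by fun_prop))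
    have m2 : MeasurableSet {q : (ℝ × ℝ) × ℝ | q.2 ≤ q.1.2 ∧ q.1.2 < q.2 + s} :=
      (measurableSet_le (f := fun q : (ℝ × ℝ) × ℝ => q.2) (g := fun q => q.1.2) (by fun_prop) (by fun_prop)).inter
        (measurableSet_lt (f := fun q : (ℝ × ℝ) × ℝ => q.1.2) (g := fun q => q.2 + s) (by fun_prop) (by fun_prop))
    exact (((measurable_const (a := (1:ℝ))).indicator m1)).mul (((measurable_const (a := (1:ℝ))).indicator m2))
  · intro p w
    exact mul_nonneg (Set.indicator_nonneg (fun _ _ => zero_le_one) _)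
      (Set.indicator_nonneg (fun _ _ => zero_le_one) _)
  · refine ae_of_all _ fun p => ?_
    simp only [tent_fun]
    rw [integrable_indicator_iff measurableSet_Ioc]
    exact integrableOn_const (by simp)
  · simp only [tent_eq]
    exact hTint

lemma log_tent {a R : ℝ} (ha : 0 < a) (haR : a ≤ R) :
    Integrable (fun s => s⁻¹ ^ 2 * max 0 (s - a)) (volume.restrict (Set.Ioc 0 R)) ∧
    ∫ s, s⁻¹ ^ 2 * max 0 (s - a) ∂(volume.restrict (Set.Ioc 0 R))
      = Real.log R - Real.log a + a / R - 1 := by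
  have hR : 0 < R := ha.trans_le haR
  have hfun : Set.EqOn (fun s => s⁻¹ ^ 2 * max 0 (s - a))
      ((Set.Ioc a R).indicator (fun s => s⁻¹ - a * s⁻¹ ^ 2)) (Set.Ioc 0 R) := by
    intro s hs
    by_cases h : s ∈ Set.Ioc a R
    · simp only [Set.indicator_of_mem h]
      rw [max_eq_right (by linarith [h.1])]
      have := hs.1.ne'
      field_simp
    · simp only [Set.indicator_of_notMem h]
      have : s ≤ a := by
        by_contra hc
        exact h ⟨not_le.1 hc, hs.2⟩
      rw [max_eq_left (by linarith)]
      simp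
  have hc : ContinuousOn (fun s : ℝ => s⁻¹ - a * s⁻¹ ^ 2) (Set.uIcc a R) := by
    have : ContinuousOn (fun s : ℝ => s⁻¹) (Set.uIcc a R) := by
      refine continuousOn_inv₀.mono fun s hs => ?_
      rw [Set.uIcc_of_le haR] at hs
      exact (ha.trans_le hs.1).ne'
    fun_prop
  have hii : IntervalIntegrable (fun s : ℝ => s⁻¹ - a * s⁻¹ ^ 2) volume a R := hc.intervalIntegrable
  have hsub : Set.Ioc 0 R ∩ Set.Ioc a R = Set.Ioc a R :=
    Set.inter_eq_right.2 (Set.Ioc_subset_Ioc_left ha.le)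
  constructor
  · have : IntegrableOn ((Set.Ioc a R).indicator (fun s : ℝ => s⁻¹ - a * s⁻¹ ^ 2)) (Set.Ioc 0 R) := by
      refine Integrable.integrableOn ?_
      rw [integrable_indicator_iff measurableSet_Ioc]
      exact (intervalIntegrable_iff_integrableOn_Ioc_of_le haR).1 hii
    exact this.congr_fun hfun.symm measurableSet_Ioc
  · rw [setIntegral_congr_fun measurableSet_Ioc hfun, setIntegral_indicator measurableSet_Ioc, hsub,
      ← intervalIntegral.integral_of_le haR,
      intervalIntegral.integral_eq_sub_of_hasDerivAt (f := fun s => Real.log s + a * s⁻¹) ?_ hii]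
    · field_simp
      ring
    · intro s hs
      rw [Set.uIcc_of_le haR] at hs
      have hs0 : s ≠ 0 := (ha.trans_le hs.1).ne'
      have := (Real.hasDerivAt_log hs0).add ((hasDerivAt_inv hs0).const_mul a)
      refine this.congr_deriv ?_
      field_simp
      ring

lemma ae_ne_prod (A B : ℝ) : ∀ᵐ p ∂((lamM A B).prod (lamM A B)), p.1 ≠ p.2 := by
  rw [Measure.ae_prod_iff_ae_ae]
  · refine ae_of_all _ fun x => ?_
    have : ∀ᵐ y ∂(lamM A B), y ≠ x := by
      have := measure_singleton (μ := lamM A B) x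
      exact compl_mem_ae_iff.2 this
    filter_upwards [this] with y hy using hy.symm
  · exact (measurableSet_eq_fun measurable_fst measurable_snd).compl

lemma ae_mem_prod (A B : ℝ) : ∀ᵐ p ∂((lamM A B).prod (lamM A B)),
    p.1 ∈ Set.Icc A B ∧ p.2 ∈ Set.Icc A B := by
  rw [Measure.prod_restrict]
  exact ae_restrict_mem (measurableSet_Icc.prod measurableSet_Icc)

lemma abs_le_of_mem {A B x y : ℝ} (hx : x ∈ Set.Icc A B) (hy : y ∈ Set.Icc A B) : |x - y| ≤ B - A := by
  rw [abs_le]; obtain ⟨h1, h2⟩ := hx; obtain ⟨h3, h4⟩ := hy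
  constructor <;> linarith

lemma logForm_pos {A B : ℝ} (hAB : A < B) {h : ℝ → ℝ} (hh : BddMeas h)
    (h0 : ∫ x, h x ∂(lamM A B) = 0) :
    (B - A)⁻¹ * (∫ z, (∫ x, (Set.Ico z (z+(B-A))).indicator (fun _ => (1:ℝ)) x * h x ∂(lamM A B))^2)
      ≤ logForm A B h h := by
  set R := B - A with hRdef
  have hR : 0 < R := by linarith
  set Λ := (lamM A B).prod (lamM A B) with hΛ
  have hk : ∀ᵐ p ∂Λ, 0 < |p.1 - p.2| ∧ |p.1 - p.2| ≤ R := by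
    filter_upwards [ae_ne_prod A B, ae_mem_prod A B] with p h1 h2
    exact ⟨abs_pos.2 (sub_ne_zero.2 h1), abs_le_of_mem h2.1 h2.2⟩
  have hcont : Continuous fun p : ℝ × ℝ => max 0 (R - |p.1 - p.2|) := by fun_prop
  have hTint : Integrable (fun p : ℝ × ℝ => max 0 (R - |p.1 - p.2|)) Λ := by
    refine Integrable.of_bound hcont.aestronglyMeasurable |R| (ae_of_all _ fun p => ?_)
    rw [Real.norm_of_nonneg (le_max_left _ _)]
    refine max_le (abs_nonneg _) ?_
    linarith [le_abs_self R, abs_nonneg (p.1 - p.2)]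
  have hrep : ∀ᵐ p ∂Λ, ∫ s, s⁻¹ ^ 2 * max 0 (s - |p.1 - p.2|) ∂(volume.restrict (Set.Ioc 0 R))
      = Real.log R + -Real.log |p.1 - p.2| - R⁻¹ * max 0 (R - |p.1 - p.2|) := by
    filter_upwards [hk] with p hp
    rw [(log_tent hp.1 hp.2).2, max_eq_right (by linarith [hp.2])]
    field_simp
    ring
  have hTint2 : Integrable (fun p : ℝ × ℝ => ∫ s, s⁻¹ ^ 2 * max 0 (s - |p.1 - p.2|)
      ∂(volume.restrict (Set.Ioc 0 R))) Λ := by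
    refine Integrable.congr ?_ (hrep.mono fun p hp => hp.symm)
    exact ((integrable_const _).add (kernel_integrable A B)).sub (hTint.const_mul _)
  have key := form_swap (A := A) (B := B) (volume.restrict (Set.Ioc 0 R))
    (fun p s => s⁻¹ ^ 2 * max 0 (s - |p.1 - p.2|)) (by fun_prop)
    (fun p s => by positivity) (hk.mono fun p hp => (log_tent hp.1 hp.2).1) hTint2 hh
  have hpos : 0 ≤ ∫ p : ℝ × ℝ, (∫ s, s⁻¹ ^ 2 * max 0 (s - |p.1 - p.2|)
      ∂(volume.restrict (Set.Ioc 0 R))) * (h p.1 * h p.2) ∂Λ := by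
    rw [key.2]
    refine integral_nonneg fun s => ?_
    simp only [mul_assoc]
    rw [integral_const_mul]
    refine mul_nonneg (by positivity) ?_
    rw [(tentForm_eq s hh).2]
    exact integral_nonneg fun z => sq_nonneg _
  have hzero : ∫ p : ℝ × ℝ, h p.1 * h p.2 ∂Λ = 0 := by
    rw [hΛ, integral_prod_mul, h0, zero_mul]
  have hhi : Integrable (fun p : ℝ × ℝ => h p.1 * h p.2) Λ :=
    (hh.integrable _).mul_prod (hh.integrable _)
  have hdec : logForm A B h h = (∫ p : ℝ × ℝ, (∫ s, s⁻¹ ^ 2 * max 0 (s - |p.1 - p.2|)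
      ∂(volume.restrict (Set.Ioc 0 R))) * (h p.1 * h p.2) ∂Λ)
      + R⁻¹ * (∫ p : ℝ × ℝ, max 0 (R - |p.1 - p.2|) * (h p.1 * h p.2) ∂Λ)
      - Real.log R * ∫ p : ℝ × ℝ, h p.1 * h p.2 ∂Λ := by
    rw [← integral_const_mul, ← integral_const_mul, ← integral_add, ← integral_sub]
    · refine integral_congr_ae (hrep.mono fun p hp => ?_)
      simp only [hp]
      ring
    · exact (bounded_mul_integrable hTint2 hh hh).add ((bounded_mul_integrable hTint hh hh).const_mul _)
    · exact hhi.const_mul _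
    · exact bounded_mul_integrable hTint2 hh hh
    · exact (bounded_mul_integrable hTint hh hh).const_mul _
  rw [hdec, hzero, (tentForm_eq R hh).2]
  linarith

lemma logForm_nonneg {A B : ℝ} (hAB : A < B) {h : ℝ → ℝ} (hh : BddMeas h)
    (h0 : ∫ x, h x ∂(lamM A B) = 0) : 0 ≤ logForm A B h h := by
  refine le_trans ?_ (logForm_pos hAB hh h0)
  exact mul_nonneg (inv_nonneg.2 (by linarith)) (integral_nonneg fun z => sq_nonneg _)

lemma logForm_zero {A B : ℝ} (hAB : A < B) {h : ℝ → ℝ} (hh : BddMeas h)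
    (h0 : ∫ x, h x ∂(lamM A B) = 0) (hz : logForm A B h h ≤ 0) :
    h =ᵐ[lamM A B] 0 := by
  have hR : 0 < B - A := by linarith
  have h1 := logForm_pos hAB hh h0
  have h2 : ∫ z, (∫ x, (Set.Ico z (z+(B-A))).indicator (fun _ => (1:ℝ)) x * h x ∂(lamM A B))^2 = 0 := by
    refine le_antisymm ?_ (integral_nonneg fun z => sq_nonneg _)
    by_contra hc
    have := mul_pos (inv_pos.2 hR) (not_le.1 hc)
    linarith
  rw [integral_eq_zero_iff_of_nonneg (fun z => sq_nonneg _) (tentForm_eq _ hh).1] at h2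
  have hii : ∀ a b : ℝ, IntervalIntegrable h volume a b := fun a b => by
    rw [intervalIntegrable_iff, Set.uIoc]
    exact hh.integrable (volume.restrict (Set.Ioc (min a b) (max a b)))
  have hcont : Continuous fun z => ∫ x in A..z, h x :=
    intervalIntegral.continuous_primitive hii A
  have h3 : (fun z => ∫ x in A..z, h x) =ᵐ[volume.restrict (Set.Icc A B)] fun _ => 0 := by
    filter_upwards [ae_restrict_of_ae h2, ae_restrict_mem measurableSet_Icc] with z hz hzm
    have hz' : ∫ x, (Set.Ico z (z+(B-A))).indicator (fun _ => (1:ℝ)) x * h x ∂(lamM A B) = 0 :=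
      pow_eq_zero_iff (two_ne_zero) |>.1 hz
    have e1 : ∀ x, (Set.Ico z (z+(B-A))).indicator (fun _ => (1:ℝ)) x * h x
        = (Set.Ico z (z+(B-A))).indicator h x := by
      intro x
      by_cases hx : x ∈ Set.Ico z (z+(B-A)) <;> simp [hx]
    simp only [e1] at hz'
    rw [integral_indicator measurableSet_Ico, Measure.restrict_restrict measurableSet_Ico] at hz'
    have e2 : (Set.Ico z (z+(B-A)) ∩ Set.Icc A B : Set ℝ) =ᵐ[volume] Set.Ioc z B := by
      have n1 : ∀ᵐ x : ℝ, x ≠ z := compl_mem_ae_iff.2 (measure_singleton z)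
      have n2 : ∀ᵐ x : ℝ, x ≠ B := compl_mem_ae_iff.2 (measure_singleton B)
      filter_upwards [n1, n2] with x hx1 hx2
      obtain ⟨hz1, hz2⟩ := hzm
      apply propext
      change (x ∈ Set.Ico z (z+(B-A)) ∩ Set.Icc A B) ↔ x ∈ Set.Ioc z B
      simp only [Set.mem_inter_iff, Set.mem_Ico, Set.mem_Icc, Set.mem_Ioc]
      constructor
      · rintro ⟨⟨a1, a2⟩, a3, a4⟩
        exact ⟨lt_of_le_of_ne a1 hx1.symm, a4⟩
      · rintro ⟨a1, a2⟩
        have : x < B := lt_of_le_of_ne a2 hx2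
        refine ⟨⟨a1.le, by linarith⟩, by linarith, a2⟩
    rw [setIntegral_congr_set e2, ← intervalIntegral.integral_of_le hzm.2] at hz'
    have h0' : ∫ x in A..B, h x = 0 := by
      rw [intervalIntegral.integral_of_le hAB.le, ← integral_Icc_eq_integral_Ioc]
      exact h0
    have := intervalIntegral.integral_add_adjacent_intervals (hii A z) (hii z B)
    linarith
  have h4 := Measure.eqOn_Icc_of_ae_eq volume hAB.ne h3 hcont.continuousOn continuousOn_const
  have h5 := (hii A B).ae_hasDerivAt_integral
  have n1 : ∀ᵐ x : ℝ, x ≠ A := compl_mem_ae_iff.2 (measure_singleton A)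
  have n2 : ∀ᵐ x : ℝ, x ≠ B := compl_mem_ae_iff.2 (measure_singleton B)
  filter_upwards [ae_restrict_of_ae h5, ae_restrict_mem measurableSet_Icc, ae_restrict_of_ae n1,
    ae_restrict_of_ae n2] with x hx hxm hxA hxB
  rw [Set.uIcc_of_le hAB.le] at hx
  have hd := hx hxm A ⟨le_rfl, hAB.le⟩
  have hev : (fun z => ∫ x in A..z, h x) =ᶠ[𝓝 x] fun _ => 0 := by
    filter_upwards [Icc_mem_nhds (lt_of_le_of_ne hxm.1 hxA.symm) (lt_of_le_of_ne hxm.2 hxB)] with z hz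
    exact h4 hz
  exact hd.unique ((hasDerivAt_const x (0:ℝ)).congr_of_eventuallyEq hev)

/-- Admissible densities below a bounded measurable function `κ`. -/
structure AdmDens (A B : ℝ) (κ f : ℝ → ℝ) : Prop where
  meas : Measurable f
  nonneg : ∀ x, 0 ≤ f x
  le : ∀ x, f x ≤ κ x
  int : ∫ x, f x ∂(lamM A B) = 1

/-- The energy of a density. -/
noncomputable def densEnergy (A B : ℝ) (κ f : ℝ → ℝ) : ℝ :=
  logForm A B f f + 2 * logForm A B f κ

lemma AdmDens.bdd {A B : ℝ} {κ f : ℝ → ℝ} (hf : AdmDens A B κ f) (hκ : BddMeas κ) : BddMeas f := by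
  obtain ⟨hk, M, hM⟩ := hκ
  refine ⟨hf.meas, M, fun x => ?_⟩
  rw [abs_of_nonneg (hf.nonneg x)]
  exact (hf.le x).trans ((le_abs_self _).trans (hM x))

/-- midpoint -/
noncomputable def midp (f g : ℝ → ℝ) : ℝ → ℝ := fun x => (1/2) * f x + (1/2) * g x

lemma AdmDens.mid {A B : ℝ} {κ f g : ℝ → ℝ} (hf : AdmDens A B κ f) (hg : AdmDens A B κ g)
    (hκ : BddMeas κ) : AdmDens A B κ (midp f g) where
  meas := (hf.meas.const_mul _).add (hg.meas.const_mul _)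
  nonneg x := by have := hf.nonneg x; have := hg.nonneg x; unfold midp; linarith
  le x := by have := hf.le x; have := hg.le x; unfold midp; linarith
  int := by
    unfold midp
    rw [integral_add, integral_const_mul, integral_const_mul, hf.int, hg.int]
    · norm_num
    · exact ((hf.bdd hκ).integrable _).const_mul _
    · exact ((hg.bdd hκ).integrable _).const_mul _

lemma densEnergy_mid {A B : ℝ} {κ f g : ℝ → ℝ} (hf : AdmDens A B κ f) (hg : AdmDens A B κ g)
    (hκ : BddMeas κ) :
    densEnergy A B κ (midp f g) = (densEnergy A B κ f + densEnergy A B κ g) / 2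
      - logForm A B (fun x => f x - g x) (fun x => f x - g x) / 4 := by
  have bf := hf.bdd hκ
  have bg := hg.bdd hκ
  have bm := (hf.mid hg hκ).bdd hκ
  have bs := bf.sub bg
  have e : (fun x => f x - g x) = fun x => 1 * f x + (-1) * g x := by ext x; ring
  have c1 : ∀ h, BddMeas h → logForm A B (midp f g) h = 1/2 * logForm A B f h + 1/2 * logForm A B g h :=
    fun h hh => logForm_comb A B _ _ bf bg hh
  have c2 : ∀ h, BddMeas h → logForm A B (fun x => f x - g x) h
      = 1 * logForm A B f h + (-1) * logForm A B g h := by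
    intro h hh
    rw [e]
    exact logForm_comb A B _ _ bf bg hh
  unfold densEnergy
  rw [c1 _ bm, c1 _ hκ, c2 _ bs, logForm_comm A B f (midp f g), logForm_comm A B g (midp f g),
    c1 _ bf, c1 _ bg, logForm_comm A B f (fun x => f x - g x), logForm_comm A B g (fun x => f x - g x),
    c2 _ bf, c2 _ bg, logForm_comm A B g f]
  ring

lemma sub_int_zero {A B : ℝ} {κ f g : ℝ → ℝ} (hf : AdmDens A B κ f) (hg : AdmDens A B κ g)
    (hκ : BddMeas κ) : ∫ x, f x - g x ∂(lamM A B) = 0 := by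
  rw [integral_sub ((hf.bdd hκ).integrable _) ((hg.bdd hκ).integrable _), hf.int, hg.int, sub_self]

lemma densEnergy_mid_le {A B : ℝ} (hAB : A < B) {κ f g : ℝ → ℝ} (hf : AdmDens A B κ f)
    (hg : AdmDens A B κ g) (hκ : BddMeas κ) {c : ℝ} (h1 : densEnergy A B κ f ≤ c)
    (h2 : densEnergy A B κ g ≤ c) : densEnergy A B κ (midp f g) ≤ c := by
  rw [densEnergy_mid hf hg hκ]
  have := logForm_nonneg hAB ((hf.bdd hκ).sub (hg.bdd hκ)) (sub_int_zero hf hg hκ)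
  linarith

lemma dens_unique {A B : ℝ} (hAB : A < B) {κ f g : ℝ → ℝ} (hf : AdmDens A B κ f)
    (hg : AdmDens A B κ g) (hκ : BddMeas κ)
    (h1 : ∀ u, AdmDens A B κ u → densEnergy A B κ f ≤ densEnergy A B κ u)
    (h2 : ∀ u, AdmDens A B κ u → densEnergy A B κ g ≤ densEnergy A B κ u) :
    f =ᵐ[lamM A B] g := by
  have e := densEnergy_mid hf hg hκ
  have a1 := h1 _ (hf.mid hg hκ)
  have a2 := h2 _ (hf.mid hg hκ)
  have := logForm_zero hAB ((hf.bdd hκ).sub (hg.bdd hκ)) (sub_int_zero hf hg hκ) (by linarith)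
  filter_upwards [this] with x hx
  simp only [Pi.zero_apply] at hx
  linarith

lemma logForm_tendsto {A B : ℝ} {F G : ℕ → ℝ → ℝ} {f g : ℝ → ℝ} {M N : ℝ}
    (hF : ∀ n, Measurable (F n)) (hG : ∀ n, Measurable (G n)) (hFM : ∀ n x, |F n x| ≤ M)
    (hGN : ∀ n x, |G n x| ≤ N)
    (h1 : ∀ᵐ x ∂(lamM A B), Tendsto (fun n => F n x) atTop (𝓝 (f x)))
    (h2 : ∀ᵐ x ∂(lamM A B), Tendsto (fun n => G n x) atTop (𝓝 (g x))) :
    Tendsto (fun n => logForm A B (F n) (G n)) atTop (𝓝 (logForm A B f g)) := by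
  unfold logForm
  refine tendsto_integral_of_dominated_convergence
    (fun p => ‖-Real.log |p.1 - p.2|‖ * (M * N)) ?_ ?_ ?_ ?_
  · intro n
    exact (logForm_integrable A B ⟨hF n, M, hFM n⟩ ⟨hG n, N, hGN n⟩).aestronglyMeasurable
  · exact (kernel_integrable A B).norm.mul_const _
  · intro n
    refine ae_of_all _ fun p => ?_
    rw [norm_mul, norm_mul]
    refine mul_le_mul_of_nonneg_left ?_ (norm_nonneg _)
    exact mul_le_mul (hFM _ _) (hGN _ _) (norm_nonneg _) ((abs_nonneg _).trans (hFM n p.1))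
  · have q1 := (Measure.quasiMeasurePreserving_fst (μ := lamM A B) (ν := lamM A B)).ae h1
    have q2 := (Measure.quasiMeasurePreserving_snd (μ := lamM A B) (ν := lamM A B)).ae h2
    filter_upwards [q1, q2] with p hp1 hp2
    exact (hp1.mul hp2).const_mul _

lemma densEnergy_bdd_below {A B : ℝ} {κ : ℝ → ℝ} (hκ : BddMeas κ) :
    ∃ c, ∀ f, AdmDens A B κ f → c ≤ densEnergy A B κ f := by
  obtain ⟨hk, M, hM⟩ := id hκ
  set I := ∫ p : ℝ × ℝ, ‖-Real.log |p.1 - p.2|‖ * (M * M) ∂((lamM A B).prod (lamM A B))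
  have key : ∀ f g : ℝ → ℝ, (∀ x, |f x| ≤ M) → (∀ x, |g x| ≤ M) → -I ≤ logForm A B f g := by
    intro f g hf hg
    refine neg_le_of_abs_le ?_
    unfold logForm
    rw [← Real.norm_eq_abs]
    refine norm_integral_le_of_norm_le ((kernel_integrable A B).norm.mul_const _) (ae_of_all _ fun p => ?_)
    rw [norm_mul, norm_mul]
    refine mul_le_mul_of_nonneg_left ?_ (norm_nonneg _)
    exact mul_le_mul (hf _) (hg _) (norm_nonneg _) ((abs_nonneg _).trans (hf p.1))
  refine ⟨-I + 2 * (-I), fun f hf => ?_⟩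
  have hfM : ∀ x, |f x| ≤ M := fun x => by
    rw [abs_of_nonneg (hf.nonneg x)]
    exact (hf.le x).trans ((le_abs_self _).trans (hM x))
  have := key f f hfM hfM
  have := key f κ hfM hM
  unfold densEnergy
  linarith

/-- Abstract selection lemma in an inner product space. -/
lemma exists_cauchy_selection {H : Type*} [NormedAddCommGroup H] [InnerProductSpace ℝ H]
    (C : ℕ → Set H) (hne : ∀ n, (C n).Nonempty) (hanti : Antitone C)
    (hmid : ∀ n, ∀ u ∈ C n, ∀ v ∈ C n, (1/2 : ℝ) • u + (1/2 : ℝ) • v ∈ C n)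
    (M₀ : ℝ) (hM₀ : ∀ u ∈ C 0, ‖u‖ ≤ M₀) :
    ∃ p : ℕ → H, (∀ n, p n ∈ C n) ∧ CauchySeq p := by
  set M := M₀ ^ 2
  have hM : ∀ u ∈ C 0, ‖u‖ ^ 2 ≤ M := fun u hu => pow_le_pow_left₀ (norm_nonneg _) (hM₀ u hu) 2
  set d : ℕ → ℝ := fun n => sInf ((fun u => ‖u‖ ^ 2) '' C n) with hd
  have hbb : ∀ n, BddBelow ((fun u : H => ‖u‖ ^ 2) '' C n) := fun n =>
    ⟨0, by rintro _ ⟨u, -, rfl⟩; positivity⟩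
  have hdle : ∀ n, ∀ u ∈ C n, d n ≤ ‖u‖ ^ 2 := fun n u hu => csInf_le (hbb n) ⟨u, hu, rfl⟩
  have hdmono : Monotone d := fun m n hmn =>
    csInf_le_csInf (hbb m) ((hne n).image _) (Set.image_mono (hanti hmn))
  have hdM : ∀ n, d n ≤ M := fun n => by
    obtain ⟨u, hu⟩ := hne n
    exact (hdle n u hu).trans (hM u (hanti (Nat.zero_le n) hu))
  have hsel : ∀ n : ℕ, ∃ u ∈ C n, ‖u‖ ^ 2 < d n + 1 / ((n : ℝ) + 1) := by
    intro n
    have hpos : (0:ℝ) < 1 / ((n : ℝ) + 1) := by positivity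
    obtain ⟨_, ⟨u, hu, rfl⟩, h⟩ := exists_lt_of_csInf_lt ((hne n).image (fun u : H => ‖u‖ ^ 2))
      (lt_add_of_pos_right (d n) hpos)
    exact ⟨u, hu, h⟩
  choose p hp hpd using hsel
  refine ⟨p, hp, ?_⟩
  have hlim : Tendsto d atTop (𝓝 (⨆ n, d n)) :=
    tendsto_atTop_ciSup hdmono ⟨M, by rintro _ ⟨n, rfl⟩; exact hdM n⟩
  set L := ⨆ n, d n
  have hdL : ∀ n, d n ≤ L := fun n => le_ciSup (f := d) ⟨M, by rintro _ ⟨n, rfl⟩; exact hdM n⟩ n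
  have hest : ∀ N m n, N ≤ m → N ≤ n → ‖p m - p n‖ ^ 2 ≤ 4 * (L - d N) + 4 * (1 / ((N : ℝ) + 1)) := by
    intro N m n hm hn
    have h1 := hmid N _ (hanti hm (hp m)) _ (hanti hn (hp n))
    have h2 := hdle N _ h1
    have h3 := parallelogram_law_with_norm ℝ (p m) (p n)
    have h4 : ‖(1/2 : ℝ) • p m + (1/2 : ℝ) • p n‖ = 1/2 * ‖p m + p n‖ := by
      rw [← smul_add, norm_smul]; norm_num
    rw [h4] at h2
    have h5 : ∀ k, N ≤ k → ‖p k‖ ^ 2 ≤ L + 1 / ((N : ℝ) + 1) := by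
      intro k hk
      have : 1 / ((k : ℝ) + 1) ≤ 1 / ((N : ℝ) + 1) := by
        have : (N : ℝ) ≤ k := by exact_mod_cast hk
        gcongr
      linarith [hpd k, hdL k]
    have h6 := h5 m hm
    have h7 := h5 n hn
    nlinarith
  have hb : Tendsto (fun N : ℕ => 4 * (L - d N) + 4 * (1 / ((N : ℝ) + 1))) atTop (𝓝 0) := by
    have := ((hlim.const_sub L).const_mul 4).add ((tendsto_one_div_add_atTop_nhds_zero_nat (𝕜 := ℝ)).const_mul 4)
    simpa using this
  have hb' : Tendsto (fun N : ℕ => Real.sqrt (4 * (L - d N) + 4 * (1 / ((N : ℝ) + 1)))) atTop (𝓝 0) := by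
    have := (Real.continuous_sqrt.tendsto 0).comp hb
    simpa [Function.comp_def] using this
  refine cauchySeq_of_le_tendsto_0 _ (fun m n N hm hn => ?_) hb'
  rw [dist_eq_norm]
  exact Real.le_sqrt_of_sq_le (hest N m n hm hn)

lemma dens_exists {A B : ℝ} (hAB : A < B) {κ : ℝ → ℝ} (hκ : BddMeas κ)
    (hne : ∃ f, AdmDens A B κ f) :
    ∃ f, AdmDens A B κ f ∧ ∀ u, AdmDens A B κ u → densEnergy A B κ f ≤ densEnergy A B κ u := by
  obtain ⟨f₀, hf₀⟩ := hne
  obtain ⟨c, hc⟩ := densEnergy_bdd_below (A := A) (B := B) hκ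
  obtain ⟨hk, M, hM⟩ := id hκ
  set m := sInf (densEnergy A B κ '' {f | AdmDens A B κ f}) with hm
  have hbb : BddBelow (densEnergy A B κ '' {f | AdmDens A B κ f}) :=
    ⟨c, by rintro _ ⟨f, hf, rfl⟩; exact hc f hf⟩
  have hmle : ∀ u, AdmDens A B κ u → m ≤ densEnergy A B κ u := fun u hu => csInf_le hbb ⟨u, hu, rfl⟩
  set C : ℕ → Set (Lp ℝ 2 (lamM A B)) := fun n => {u | ∃ f, AdmDens A B κ f ∧
    densEnergy A B κ f ≤ m + 1 / ((n : ℝ) + 1) ∧ u =ᵐ[lamM A B] f} with hC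
  have hmem : ∀ f, AdmDens A B κ f → MemLp f 2 (lamM A B) := fun f hf => by
    obtain ⟨h1, N, hN⟩ := hf.bdd hκ
    exact MemLp.of_bound h1.aestronglyMeasurable N (ae_of_all _ hN)
  have hfM : ∀ f, AdmDens A B κ f → ∀ x, |f x| ≤ M := fun f hf x => by
    rw [abs_of_nonneg (hf.nonneg x)]
    exact (hf.le x).trans ((le_abs_self _).trans (hM x))
  obtain ⟨p, hpC, hpc⟩ : ∃ p : ℕ → Lp ℝ 2 (lamM A B), (∀ n, p n ∈ C n) ∧ CauchySeq p := by
    refine exists_cauchy_selection C ?_ ?_ ?_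
      ((measureUnivNNReal (lamM A B) : ℝ) ^ ((2 : ENNReal).toReal⁻¹) * M) ?_
    · intro n
      have hpos : (0:ℝ) < 1 / ((n : ℝ) + 1) := by positivity
      obtain ⟨_, ⟨f, hf, rfl⟩, hlt⟩ := exists_lt_of_csInf_lt (s := densEnergy A B κ '' {f | AdmDens A B κ f})
        ⟨_, f₀, hf₀, rfl⟩ (lt_add_of_pos_right m hpos)
      exact ⟨(hmem f hf).toLp f, f, hf, hlt.le, (hmem f hf).coeFn_toLp⟩
    · rintro a b hab u ⟨f, hf, h1, h2⟩
      refine ⟨f, hf, h1.trans ?_, h2⟩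
      have : (a : ℝ) ≤ b := by exact_mod_cast hab
      gcongr
    · rintro n u ⟨f, hf, h1, h2⟩ v ⟨g, hg, h3, h4⟩
      refine ⟨midp f g, hf.mid hg hκ, densEnergy_mid_le hAB hf hg hκ h1 h3, ?_⟩
      filter_upwards [Lp.coeFn_add ((1/2 : ℝ) • u) ((1/2 : ℝ) • v), Lp.coeFn_smul (1/2 : ℝ) u,
        Lp.coeFn_smul (1/2 : ℝ) v, h2, h4] with x e1 e2 e3 e4 e5
      rw [e1, Pi.add_apply, e2, e3, Pi.smul_apply, Pi.smul_apply, e4, e5]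
      rfl
    · rintro u ⟨f, hf, h1, h2⟩
      refine Lp.norm_le_of_ae_bound ((abs_nonneg _).trans (hM 0)) ?_
      filter_upwards [h2] with x hx
      rw [hx]
      exact hfM f hf x
  choose F hF hFe hFp using hpC
  obtain ⟨P, hP⟩ := cauchySeq_tendsto_of_complete hpc
  obtain ⟨ns, hns, hae⟩ := (tendstoInMeasure_of_tendsto_Lp hP).exists_seq_tendsto_ae
  have hPm : Measurable P := (Lp.stronglyMeasurable P).measurable
  set f : ℝ → ℝ := fun x => max 0 (min (P x) (κ x)) with hf
  have hκ0 : ∀ x, 0 ≤ κ x := fun x => (hf₀.nonneg x).trans (hf₀.le x)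
  have hconv : ∀ᵐ x ∂(lamM A B), Tendsto (fun i => F (ns i) x) atTop (𝓝 (f x)) := by
    filter_upwards [hae, ae_all_iff.2 hFp] with x h1 h2
    have h3 : Tendsto (fun i => F (ns i) x) atTop (𝓝 (P x)) := by
      simpa only [h2] using h1
    have h4 : 0 ≤ P x := ge_of_tendsto' h3 fun i => (hF _).nonneg x
    have h5 : P x ≤ κ x := le_of_tendsto' h3 fun i => (hF _).le x
    have : f x = P x := by
      simp only [hf]
      rw [min_eq_left h5, max_eq_right h4]
    rwa [this]
  have hfa : AdmDens A B κ f := by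
    refine ⟨measurable_const.max (hPm.min hk), fun x => le_max_left _ _,
      fun x => max_le (hκ0 x) (min_le_right _ _), ?_⟩
    have : Tendsto (fun i => ∫ x, F (ns i) x ∂(lamM A B)) atTop (𝓝 (∫ x, f x ∂(lamM A B))) := by
      refine tendsto_integral_of_dominated_convergence (fun _ => M)
        (fun i => (hF _).meas.aestronglyMeasurable) (integrable_const _)
        (fun i => ae_of_all _ (hfM _ (hF _))) hconv
    simp only [(hF _).int] at this
    exact tendsto_nhds_unique this tendsto_const_nhds |>.symm ▸ rfl
  have hE : Tendsto (fun i => densEnergy A B κ (F (ns i))) atTop (𝓝 (densEnergy A B κ f)) := by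
    unfold densEnergy
    refine Tendsto.add ?_ (Tendsto.const_mul 2 ?_)
    · exact logForm_tendsto (fun i => (hF _).meas) (fun i => (hF _).meas) (fun i => hfM _ (hF _))
        (fun i => hfM _ (hF _)) hconv hconv
    · exact logForm_tendsto (G := fun _ => κ) (fun i => (hF _).meas) (fun i => hk) (fun i => hfM _ (hF _))
        (fun i => hM) hconv (ae_of_all _ fun x => tendsto_const_nhds)
  have hlim : Tendsto (fun i : ℕ => m + 1 / (((ns i : ℕ) : ℝ) + 1)) atTop (𝓝 (m + 0)) :=
    ((tendsto_one_div_add_atTop_nhds_zero_nat (𝕜 := ℝ)).comp hns.tendsto_atTop).const_add m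
  have hfin : densEnergy A B κ f ≤ m := by
    have := le_of_tendsto_of_tendsto' hE hlim fun i => hFe _
    simpa using this
  exact ⟨f, hfa, fun u hu => hfin.trans (hmle u hu)⟩

/-- measure with density `f` on `[A,B]`. -/
noncomputable def densMeas (A B : ℝ) (f : ℝ → ℝ) : Measure ℝ :=
  (lamM A B).withDensity (fun x => ENNReal.ofReal (f x))

lemma densMeas_integral {A B : ℝ} {κ f : ℝ → ℝ} (hf : AdmDens A B κ f) (g : ℝ → ℝ) :
    ∫ x, g x ∂(densMeas A B f) = ∫ x, f x * g x ∂(lamM A B) := by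
  unfold densMeas
  rw [integral_withDensity_eq_integral_toReal_smul hf.meas.ennreal_ofReal (by simp)]
  refine integral_congr_ae (ae_of_all _ fun x => ?_)
  simp only [ENNReal.toReal_ofReal (hf.nonneg x), smul_eq_mul]

lemma densMeas_energy {A B : ℝ} (hAB : A < B) {κ κ' f : ℝ → ℝ} (hκ' : BddMeas κ')
    (he : Set.EqOn κ κ' (Set.Icc A B)) (hf : AdmDens A B κ' f) :
    logEnergy A B κ (densMeas A B f) = densEnergy A B κ' f := by
  have bf := hf.bdd hκ'
  unfold logEnergy densEnergy
  congr 1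
  · rw [densMeas_integral hf]
    unfold logForm
    rw [integral_prod _ (logForm_integrable A B bf bf)]
    refine integral_congr_ae (ae_of_all _ fun x => ?_)
    simp only
    rw [densMeas_integral hf, ← integral_const_mul]
    refine integral_congr_ae (ae_of_all _ fun y => ?_)
    simp only [one_div, Real.log_inv]
    ring
  · rw [densMeas_integral hf]
    unfold logForm
    rw [integral_prod _ (logForm_integrable A B bf hκ'), ← integral_const_mul]
    refine integral_congr_ae (ae_of_all _ fun x => ?_)
    simp only
    unfold extField
    rw [intervalIntegral.integral_of_le hAB.le, ← integral_Icc_eq_integral_Ioc, ← integral_const_mul,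
      ← integral_const_mul, ← integral_const_mul]
    refine setIntegral_congr_fun measurableSet_Icc fun y hy => ?_
    simp only [he hy]
    ring

lemma densMeas_adm {A B : ℝ} {κ κ' f : ℝ → ℝ} (hκ' : BddMeas κ')
    (he : Set.EqOn κ κ' (Set.Icc A B)) (hf : AdmDens A B κ' f) :
    AdmissibleClass A B κ (densMeas A B f) := by
  have hac : densMeas A B f ≪ lamM A B := withDensity_absolutelyContinuous _ _
  refine ⟨⟨?_⟩, hac ?_, hac.trans Measure.restrict_le_self.absolutelyContinuous, ?_⟩
  · unfold densMeas
    rw [withDensity_apply _ MeasurableSet.univ, Measure.restrict_univ,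
      ← ofReal_integral_eq_lintegral_ofReal ((hf.bdd hκ').integrable _) (ae_of_all _ hf.nonneg), hf.int]
    simp
  · rw [Measure.restrict_apply measurableSet_Icc.compl]
    simp
  · unfold densMeas lamM
    rw [← withDensity_indicator measurableSet_Icc]
    have := Measure.rnDeriv_withDensity volume
      (f := (Set.Icc A B).indicator fun x => ENNReal.ofReal (f x))
      (hf.meas.ennreal_ofReal.indicator measurableSet_Icc)
    filter_upwards [ae_restrict_of_ae this, ae_restrict_mem measurableSet_Icc] with x hx hxm
    rw [hx, Set.indicator_of_mem hxm, he hxm]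
    exact ENNReal.ofReal_le_ofReal (hf.le x)

lemma exists_dens {A B : ℝ} {κ κ' : ℝ → ℝ} (hκ' : BddMeas κ') (h0 : ∀ x, 0 ≤ κ' x)
    (he : Set.EqOn κ κ' (Set.Icc A B)) {μ : Measure ℝ} (hμ : AdmissibleClass A B κ μ) :
    ∃ f, AdmDens A B κ' f ∧ μ = densMeas A B f := by
  obtain ⟨hp, hs, hac, hle⟩ := hμ
  set f : ℝ → ℝ := fun x => min ((μ.rnDeriv volume x).toReal) (κ' x) with hf
  have hfm : Measurable f := (Measure.measurable_rnDeriv _ _).ennreal_toReal.min hκ'.1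
  have hf0 : ∀ x, 0 ≤ f x := fun x => le_min ENNReal.toReal_nonneg (h0 x)
  have heq : μ = densMeas A B f := by
    have e1 : μ = μ.restrict (Set.Icc A B) := by
      symm
      exact Measure.restrict_eq_self_of_ae_mem hs
    rw [e1]
    conv_lhs => rw [← Measure.withDensity_rnDeriv_eq μ volume hac, restrict_withDensity measurableSet_Icc]
    refine withDensity_congr_ae ?_
    filter_upwards [hle, ae_restrict_mem measurableSet_Icc] with x hx hxm
    rw [he hxm] at hx
    have hfin : μ.rnDeriv volume x ≠ ⊤ := ne_top_of_le_ne_top ENNReal.ofReal_ne_top hx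
    simp only [hf]
    rw [min_eq_left (ENNReal.toReal_le_of_le_ofReal (h0 x) hx), ENNReal.ofReal_toReal hfin]
  refine ⟨f, ⟨hfm, hf0, fun x => min_le_right _ _, ?_⟩, heq⟩
  have h1 : μ Set.univ = 1 := measure_univ
  have hb : BddMeas f := by
    obtain ⟨_, M, hM⟩ := hκ'
    refine ⟨hfm, M, fun x => ?_⟩
    rw [abs_of_nonneg (hf0 x)]
    exact (min_le_right _ _).trans ((le_abs_self _).trans (hM x))
  rw [heq, densMeas, withDensity_apply _ MeasurableSet.univ, Measure.restrict_univ,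
      ← ofReal_integral_eq_lintegral_ofReal (hb.integrable _) (ae_of_all _ hf0)] at h1
  exact ENNReal.ofReal_eq_one.1 h1

/-- **Existence and uniqueness of the constrained equilibrium measure.**
Let `0 < A < B` and let `κ` be real-analytic and strictly positive on an open set
containing `[A,B]` with `∫_A^B κ = 2`.  Then there exists a unique measure `μ*` in the
admissible class `𝔄` minimizing the weighted logarithmic energy `I_V`: any minimizer
in `𝔄` (in particular any `μ ∈ 𝔄` with `I_V[μ] = I_V[μ*]`) equals `μ*`. -/
theorem equilibrium_measure_exists_unique
    (A B : ℝ) (hA : 0 < A) (hAB : A < B)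
    (κ : ℝ → ℝ)
    (hκ : ∃ U : Set ℝ, IsOpen U ∧ Set.Icc A B ⊆ U ∧
      ∀ x ∈ U, AnalyticAt ℝ κ x ∧ 0 < κ x)
    (hnorm : ∫ x in A..B, κ x = 2) :
    ∃! μstar : Measure ℝ, AdmissibleClass A B κ μstar ∧
      ∀ μ : Measure ℝ, AdmissibleClass A B κ μ →
        logEnergy A B κ μstar ≤ logEnergy A B κ μ := by
  obtain ⟨U, -, hIU, hU⟩ := hκ
  have hcont : ContinuousOn κ (Set.Icc A B) := fun x hx =>
    (hU x (hIU hx)).1.continuousAt.continuousWithinAt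
  set κ' : ℝ → ℝ := (Set.Icc A B).indicator κ with hκ'
  have he : Set.EqOn κ κ' (Set.Icc A B) := fun x hx => (Set.indicator_of_mem hx κ).symm
  have h0 : ∀ x, 0 ≤ κ' x := fun x => Set.indicator_nonneg (fun y hy => (hU y (hIU hy)).2.le) x
  have hb : BddMeas κ' := by
    constructor
    · classical
      have := hcont.measurable_piecewise (g := (0 : ℝ → ℝ)) continuousOn_const measurableSet_Icc
      rwa [Set.piecewise_eq_indicator] at this
    · obtain ⟨M, hM⟩ := isCompact_Icc.exists_bound_of_continuousOn hcont
      refine ⟨max M 0, fun x => ?_⟩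
      by_cases hx : x ∈ Set.Icc A B
      · rw [← he hx]
        exact (hM x hx).trans (le_max_left _ _)
      · rw [hκ', Set.indicator_of_notMem hx]
        simp
  have hne : ∃ f, AdmDens A B κ' f := by
    refine ⟨fun x => (1/2) * κ' x, hb.1.const_mul _, fun x => ?_, fun x => ?_, ?_⟩
    · have := h0 x
      positivity
    · have := h0 x
      linarith
    · rw [integral_const_mul]
      have : ∫ x, κ' x ∂(lamM A B) = 2 := by
        rw [← hnorm, intervalIntegral.integral_of_le hAB.le, ← integral_Icc_eq_integral_Ioc]
        exact setIntegral_congr_fun measurableSet_Icc he.symm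
      rw [this]
      norm_num
  obtain ⟨f, hf, hmin⟩ := dens_exists hAB hb hne
  refine ⟨densMeas A B f, ⟨densMeas_adm hb he hf, ?_⟩, ?_⟩
  · intro μ hμ
    obtain ⟨g, hg, rfl⟩ := exists_dens hb h0 he hμ
    rw [densMeas_energy hAB hb he hf, densMeas_energy hAB hb he hg]
    exact hmin g hg
  · rintro μ ⟨hμ, hμmin⟩
    obtain ⟨g, hg, rfl⟩ := exists_dens hb h0 he hμ
    have hgmin : ∀ u, AdmDens A B κ' u → densEnergy A B κ' g ≤ densEnergy A B κ' u := by
      intro u hu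
      have := hμmin _ (densMeas_adm hb he hu)
      rwa [densMeas_energy hAB hb he hg, densMeas_energy hAB hb he hu] at this
    have := dens_unique hAB hg hf hb hgmin hmin
    exact withDensity_congr_ae (this.mono fun x hx => by simp only [hx])
end

section
/- Let μ be a Borel probability measure on [A,B] ⊂ (0,∞) that is absolutely continuous with respect to Lebesgue measure with bounded density, and define g(ζ) = ∫_{[A,B]} log(ζ − x) dμ(x) for Im ζ ≠ 0, using the principal branch of the logarithm. Then for every x ∈ (A,B): (i) lim_{ε→0+} [g(x + iε) − g(x − iε)] = 2πi·μ([x,B]); (ii) lim_{ε→0+} [g(x + iε) + g(x − iε)] = 2·∫_{[A,B]} log|x − t| dμ(t). -/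
open MeasureTheory Filter Topology Complex

/-- **Sokhotski–Plemelj jump relations for the `g`-function.**
Let `0 < A < B` and let `μ` be a Borel probability measure on `[A,B] ⊂ (0,∞)`,
absolutely continuous with bounded density, and let
`g(ζ) = ∫_{[A,B]} log(ζ - x) dμ(x)` (principal branch) for `Im ζ ≠ 0`.  Then for every
`x ∈ (A,B)`:
(i)  `lim_{ε→0+} [g(x + iε) - g(x - iε)] = 2πi·μ([x,B])`;
(ii) `lim_{ε→0+} [g(x + iε) + g(x - iε)] = 2∫_{[A,B]} log|x - t| dμ(t)`. -/
theorem g_function_jump_relations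
    (A B : ℝ) (hA : 0 < A) (hAB : A < B)
    (μ : Measure ℝ) (hprob : IsProbabilityMeasure μ)
    (hsupp : μ (Set.Icc A B)ᶜ = 0)
    (hdens : ∃ (ρ : ℝ → ℝ) (M : ℝ), Measurable ρ ∧ (∀ x, 0 ≤ ρ x ∧ ρ x ≤ M) ∧
      μ = volume.withDensity (fun x => ENNReal.ofReal (ρ x)))
    (g : ℂ → ℂ)
    (hg : ∀ ζ : ℂ, ζ.im ≠ 0 → g ζ = ∫ x in Set.Icc A B, Complex.log (ζ - (x : ℂ)) ∂μ) :
    ∀ x ∈ Set.Ioo A B,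
      Tendsto (fun ε : ℝ => g ((x : ℂ) + ε * Complex.I) - g ((x : ℂ) - ε * Complex.I))
        (𝓝[>] 0)
        (𝓝 (2 * Real.pi * Complex.I * ((μ (Set.Icc x B)).toReal : ℂ))) ∧
      Tendsto (fun ε : ℝ => g ((x : ℂ) + ε * Complex.I) + g ((x : ℂ) - ε * Complex.I))
        (𝓝[>] 0)
        (𝓝 (2 * ((∫ t in Set.Icc A B, Real.log |x - t| ∂μ : ℝ) : ℂ))) := by
  intro x hx
  obtain ⟨ρ, M, hρm, hρ, hμ⟩ := hdens
  set ν := μ.restrict (Set.Icc A B) with hν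
  have hμle : μ ≤ ENNReal.ofReal M • (volume : Measure ℝ) := by
    rw [hμ, ← withDensity_const]
    exact withDensity_mono (Eventually.of_forall fun t => ENNReal.ofReal_le_ofReal (hρ t).2)
  have hνle : ν ≤ ENNReal.ofReal M • (volume : Measure ℝ).restrict (Set.Icc A B) := by
    rw [← Measure.restrict_smul]
    exact Measure.restrict_mono le_rfl hμle
  have hac : ν ≪ volume :=
    (Measure.absolutelyContinuous_of_le Measure.restrict_le_self).trans
      (hμ ▸ withDensity_absolutelyContinuous _ _)
  have hne : ∀ᵐ t ∂ν, t ≠ x := by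
    have h : ∀ᵐ t ∂(volume : Measure ℝ), t ≠ x := by
      rw [ae_iff]; simp
    exact hac.ae_le h
  have hvol : ∀ f : ℝ → ℝ, IntervalIntegrable f volume A B → Integrable f ν := by
    intro f hf
    rw [intervalIntegrable_iff_integrableOn_Icc_of_le hAB.le] at hf
    exact (Integrable.smul_measure hf ENNReal.ofReal_ne_top).mono_measure hνle
  have hlogint : Integrable (fun t => Real.log |x - t|) ν := by
    apply hvol
    have h := (intervalIntegral.intervalIntegrable_log' (a := x - A) (b := x - B)).comp_sub_left x
    simpa using h
  have hlinint : Integrable (fun t => |x - t|) ν := by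
    apply hvol
    exact Continuous.intervalIntegrable (by fun_prop) _ _
  have hpi : Integrable (fun _ : ℝ => Real.pi) ν := integrable_const _
  -- limit from above
  have hlim : Tendsto (fun ε : ℝ => ∫ t, Complex.log ((x : ℂ) + ε * Complex.I - (t : ℂ)) ∂ν) (𝓝[>] 0)
      (𝓝 (∫ t : ℝ, Complex.log ((x : ℂ) - (t : ℂ)) ∂ν)) := by
    apply tendsto_integral_filter_of_dominated_convergence
      (fun t => abs (Real.log |x - t|) + |x - t| + Real.pi)
    · refine Eventually.of_forall fun ε => Measurable.aestronglyMeasurable ?_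
      fun_prop
    · have h1 : ∀ᶠ ε : ℝ in 𝓝[>] 0, ε ∈ Set.Ioo (0 : ℝ) 1 := Ioo_mem_nhdsGT one_pos
      filter_upwards [h1] with ε hε
      filter_upwards [hne] with t ht
      set z : ℂ := (x : ℂ) + ε * Complex.I - (t : ℂ) with hz
      have hre : z.re = x - t := by simp [hz]
      have hzd : z = ((x - t : ℝ) : ℂ) + ε * Complex.I := by rw [hz]; push_cast; ring
      have hlow : |x - t| ≤ ‖z‖ := hre ▸ Complex.abs_re_le_norm z
      have hup : ‖z‖ ≤ |x - t| + 1 := by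
        rw [hzd]
        refine (norm_add_le _ _).trans ?_
        rw [Complex.norm_real, norm_mul, Complex.norm_real, Complex.norm_I, Real.norm_eq_abs,
          Real.norm_eq_abs, abs_of_pos hε.1]
        linarith [hε.2]
      have hpos : 0 < |x - t| := abs_pos.2 (sub_ne_zero.2 ht.symm)
      have hl1 : Real.log |x - t| ≤ Real.log ‖z‖ := Real.log_le_log hpos hlow
      have hl2 : Real.log ‖z‖ ≤ |x - t| := by
        have := Real.log_le_sub_one_of_pos (hpos.trans_le hlow)
        linarith
      have hl3 : |Real.log ‖z‖| ≤ abs (Real.log |x - t|) + |x - t| := by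
        rw [abs_le]
        constructor
        · linarith [neg_abs_le (Real.log |x - t|)]
        · linarith [abs_nonneg (Real.log |x - t|)]
      have hn := Complex.norm_le_abs_re_add_abs_im (Complex.log z)
      rw [Complex.log_re, Complex.log_im] at hn
      linarith [Complex.abs_arg_le_pi z]
    · exact (hlogint.abs.add hlinint).add hpi
    · filter_upwards [hne] with t ht
      have hc : Tendsto (fun ε : ℝ => (x : ℂ) + ε * Complex.I - (t : ℂ)) (𝓝[>] 0)
          (𝓝 ((x : ℂ) - t)) := by
        have : Continuous (fun ε : ℝ => (x : ℂ) + ε * Complex.I - (t : ℂ)) := by fun_prop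
        have h := this.tendsto 0
        simp only [Complex.ofReal_zero, zero_mul, add_zero] at h
        exact h.mono_left nhdsWithin_le_nhds
      rcases lt_or_gt_of_ne ht with h | h
      · refine (continuousAt_clog ?_).tendsto.comp hc
        left; simpa using h
      · have hw := Complex.continuousWithinAt_log_of_re_neg_of_im_zero (z := (x : ℂ) - t)
          (by simpa using h) (by simp)
        refine hw.tendsto.comp (tendsto_nhdsWithin_iff.2 ⟨hc, ?_⟩)
        filter_upwards [self_mem_nhdsWithin] with ε hε
        simpa using le_of_lt hε
  have hval : ∫ t : ℝ, Complex.log ((x : ℂ) - (t : ℂ)) ∂ν =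
      ((∫ t, Real.log |x - t| ∂ν : ℝ) : ℂ) +
        ((μ (Set.Icc x B)).toReal : ℂ) * (Real.pi * Complex.I) := by
    have h1 : ∫ t : ℝ, Complex.log ((x : ℂ) - (t : ℂ)) ∂ν =
        ∫ t : ℝ, (((Real.log |x - t| : ℝ) : ℂ) +
          (Set.Ici x).indicator (fun _ => (Real.pi * Complex.I : ℂ)) t) ∂ν := by
      apply integral_congr_ae
      filter_upwards [hne] with t ht
      rw [← Complex.ofReal_sub]
      apply Complex.ext
      · rw [Complex.log_re, Complex.norm_real, Real.norm_eq_abs]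
        by_cases h : t ∈ Set.Ici x <;> simp [h]
      · rw [Complex.log_im]
        rcases lt_or_gt_of_ne ht with h | h
        · have h' : t ∉ Set.Ici x := by simpa using h
          rw [Complex.arg_ofReal_of_nonneg (by linarith)]
          rw [Set.indicator_of_notMem h', add_zero, Complex.ofReal_im]
        · have h' : t ∈ Set.Ici x := le_of_lt h
          rw [Complex.arg_ofReal_of_neg (by linarith)]
          rw [Set.indicator_of_mem h']
          simp
    rw [h1, integral_add hlogint.ofReal ((integrable_const _).indicator measurableSet_Ici),
      integral_complex_ofReal, integral_indicator_const _ measurableSet_Ici, Complex.real_smul]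
    congr 3
    rw [hν, measureReal_def, Measure.restrict_apply measurableSet_Ici]
    congr 2
    ext t
    simp only [Set.mem_inter_iff, Set.mem_Ici, Set.mem_Icc]
    constructor
    · rintro ⟨a, b, c⟩; exact ⟨a, c⟩
    · rintro ⟨a, c⟩; exact ⟨a, hx.1.le.trans a, c⟩
  rw [hval] at hlim
  have hconj := (Complex.continuous_conj.tendsto _).comp hlim
  have hplus : (fun ε : ℝ => ∫ t, Complex.log ((x : ℂ) + ε * Complex.I - (t : ℂ)) ∂ν)
      =ᶠ[𝓝[>] 0] fun ε : ℝ => g ((x : ℂ) + ε * Complex.I) := by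
    filter_upwards [self_mem_nhdsWithin] with ε hε
    rw [hg _ (by simpa using (ne_of_gt hε))]
  have hminus : ((starRingEnd ℂ) ∘ fun ε : ℝ =>
      ∫ t, Complex.log ((x : ℂ) + ε * Complex.I - (t : ℂ)) ∂ν)
      =ᶠ[𝓝[>] 0] fun ε : ℝ => g ((x : ℂ) - ε * Complex.I) := by
    filter_upwards [self_mem_nhdsWithin] with ε hε
    have hε' : (0 : ℝ) < ε := hε
    rw [hg _ (by simpa using (ne_of_gt hε)), Function.comp_apply, ← integral_conj]
    congr 1
    ext t
    rw [← Complex.log_conj]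
    · simp [sub_eq_add_neg]
    · intro h
      have := (Complex.arg_eq_pi_iff.1 h).2
      simp at this
      exact hε'.ne' this
  have hp := hlim.congr' hplus
  have hm := hconj.congr' hminus
  constructor
  · convert hp.sub hm using 2
    simp
    ring
  · convert hp.add hm using 2
    simp
    ring
end
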